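/- arXiv:math/0603006 — 3 statements merged into one kernel-verified Lean document; each statement's English description precedes it below -/
import Mathlib

section
/- Let U ⊆ ℍ be a bounded open connected set containing 0, and let f : U → U be a surjection onto U which is real-analytic on U (as a map of ℝ⁴), pseudoconformal at every point of U, and satisfies f(0) = 0 and f'(0) = id (the identity map of ℍ as the Fréchet derivative at 0). Then f(z) = z for every z ∈ U. (Paper's Theorem 3.30, Cartan-type uniqueness theorem, for one quaternion variable.) -/
open scoped Quaternion

/-- `f` is pseudoconformal at `ξ`: it is Fréchet differentiable over `ℝ` at `ξ` and
its derivative has the form `h ↦ a * h * b` with nonzero quaternions `a`, `b`. -/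
def Pseudoconformal (f : ℍ[ℝ] → ℍ[ℝ]) (ξ : ℍ[ℝ]) : Prop :=
  ∃ (A : ℍ[ℝ] →L[ℝ] ℍ[ℝ]) (a b : ℍ[ℝ]), a ≠ 0 ∧ b ≠ 0 ∧
    HasFDerivAt f A ξ ∧ ∀ h : ℍ[ℝ], A h = a * h * b

noncomputable section

def qI : ℍ[ℝ] := ⟨0, 1, 0, 0⟩
@[simp] lemma qI_re : qI.re = 0 := rfl
@[simp] lemma qI_imI : qI.imI = 1 := rfl
@[simp] lemma qI_imJ : qI.imJ = 0 := rfl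
@[simp] lemma qI_imK : qI.imK = 0 := rfl

def qJ : ℍ[ℝ] := ⟨0, 0, 1, 0⟩
@[simp] lemma qJ_re : qJ.re = 0 := rfl
@[simp] lemma qJ_imI : qJ.imI = 0 := rfl
@[simp] lemma qJ_imJ : qJ.imJ = 1 := rfl
@[simp] lemma qJ_imK : qJ.imK = 0 := rfl

def qK : ℍ[ℝ] := ⟨0, 0, 0, 1⟩
@[simp] lemma qK_re : qK.re = 0 := rfl
@[simp] lemma qK_imI : qK.imI = 0 := rfl
@[simp] lemma qK_imJ : qK.imJ = 0 := rfl
@[simp] lemma qK_imK : qK.imK = 1 := rfl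

lemma sym2 (φ : ℍ[ℝ] → ℍ[ℝ]) (x : ℍ[ℝ]) (hφ : AnalyticAt ℝ φ x) (h l : ℍ[ℝ]) :
    fderiv ℝ (fun y => fderiv ℝ φ y h) x l = fderiv ℝ (fun y => fderiv ℝ φ y l) x h := by
  have hs : IsSymmSndFDerivAt ℝ φ x :=
    (hφ.contDiffAt (n := 2)).isSymmSndFDerivAt (by simp)
  have hd : DifferentiableAt ℝ (fderiv ℝ φ) x := hφ.fderiv.differentiableAt
  have key : ∀ h l : ℍ[ℝ], fderiv ℝ (fun y => fderiv ℝ φ y h) x l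
      = fderiv ℝ (fderiv ℝ φ) x l h := by
    intro h l
    rw [fderiv_clm_apply hd (differentiableAt_const h)]
    simp
  rw [key, key]
  exact hs.eq l h

lemma conf_inner (a b h k : ℍ[ℝ]) :
    inner ℝ (a * h * b) (a * k * b) = inner ℝ h k * inner ℝ (a * 1 * b) (a * 1 * b) := by
  simp only [Quaternion.inner_def, Quaternion.re_mul, Quaternion.imI_mul, Quaternion.imJ_mul, Quaternion.imK_mul, Quaternion.re_star, Quaternion.imI_star, Quaternion.imJ_star, Quaternion.imK_star, mul_one]
  ring

lemma rigid (E : ℍ[ℝ] → ℍ[ℝ])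
    (hE : ∀ h l k, h * E l * k + k * E l * h = l * E h * k + k * E h * l) : ∀ h, E h = 0 := by
  have h1 : ∀ h, (2:ℝ) • E h = h * E 1 + E 1 * h := by
    intro h
    have := hE h 1 1
    simp only [mul_one, one_mul] at this
    rw [two_smul]; exact this.symm
  have h2 : ∀ h l k, h * (l * E 1 + E 1 * l) * k + k * (l * E 1 + E 1 * l) * h =
      l * (h * E 1 + E 1 * h) * k + k * (h * E 1 + E 1 * h) * l := by
    intro h l k
    have := congrArg (fun z => (2:ℝ) • z) (hE h l k)
    simp only [smul_add] at this
    simp only [← h1, mul_smul_comm, smul_mul_assoc]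
    exact this
  have h3 : E 1 = 0 := by
    generalize E 1 = m at h2
    have e1 := h2 qI 1 qI
    have e2 := h2 qJ 1 qJ
    have e3 := h2 qI qJ qI
    simp only [Quaternion.ext_iff, Quaternion.re_add, Quaternion.imI_add, Quaternion.imJ_add, Quaternion.imK_add, Quaternion.re_mul, Quaternion.imI_mul, Quaternion.imJ_mul, Quaternion.imK_mul, Quaternion.re_one, Quaternion.imI_one, Quaternion.imJ_one, Quaternion.imK_one] at e1 e2 e3
    simp only [qI_re, qI_imI, qI_imJ, qI_imK, qJ_re, qJ_imI, qJ_imJ, qJ_imK] at e1 e2 e3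
    ext <;> simp <;> linarith
  intro h
  have := h1 h
  rw [h3] at this
  simpa using this

lemma koszul (B : ℍ[ℝ] → ℍ[ℝ] → ℍ[ℝ] → ℝ) (m : ℍ[ℝ] → ℝ)
    (hs : ∀ l h k, B l h k = B h l k)
    (hB : ∀ l h k, B l h k + B l k h = inner ℝ h k * (2 * m l)) (l h k : ℍ[ℝ]) :
    B l h k = inner ℝ h k * m l + inner ℝ l k * m h - inner ℝ l h * m k := by
  have e1 := hB l h k
  have e2 := hB h l k
  have e3 := hB k l h
  have s1 := hs l h k
  have s2 := hs l k h
  have s3 := hs h k l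
  linarith

lemma alg (m : ℍ[ℝ] →L[ℝ] ℝ) (l h k : ℍ[ℝ]) (c : ℍ[ℝ])
    (hc : c = (-m 1 / 2) • (1:ℍ[ℝ]) + (m qI / 2) • qI + (m qJ / 2) • qJ + (m qK / 2) • qK) :
    inner ℝ h k * m l + inner ℝ l k * m h - inner ℝ l h * m k
      = - inner ℝ (l * c * h + h * c * l) k := by
  have hm : ∀ z : ℍ[ℝ], m z = z.re * m 1 + z.imI * m qI + z.imJ * m qJ
      + z.imK * m qK := by
    intro z
    have : z = z.re • (1:ℍ[ℝ]) + z.imI • qI + z.imJ • qJ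
      + z.imK • qK := by
      ext <;> simp
    conv_lhs => rw [this]
    simp only [map_add, map_smul, smul_eq_mul]
  rw [hm l, hm h, hm k]
  generalize m 1 = m0 at *
  generalize m qI = m1 at *
  generalize m qJ = m2 at *
  generalize m qK = m3 at *
  have c0 : c.re = -m0 / 2 := by rw [hc]; simp
  have c1 : c.imI = m1 / 2 := by rw [hc]; simp
  have c2 : c.imJ = m2 / 2 := by rw [hc]; simp
  have c3 : c.imK = m3 / 2 := by rw [hc]; simp
  simp only [Quaternion.inner_def, Quaternion.re_mul, Quaternion.imI_mul, Quaternion.imJ_mul, Quaternion.imK_mul, Quaternion.re_star, Quaternion.imI_star, Quaternion.imJ_star, Quaternion.imK_star, Quaternion.re_add, Quaternion.imI_add, Quaternion.imJ_add, Quaternion.imK_add]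
  rw [c0, c1, c2, c3]
  ring

def muC (f : ℍ[ℝ] → ℍ[ℝ]) (x : ℍ[ℝ]) : ℍ[ℝ] →L[ℝ] ℝ :=
  (inner ℝ (fderiv ℝ f x 1) (fderiv ℝ f x 1))⁻¹ •
    ((innerSL ℝ (fderiv ℝ f x 1)).comp (fderiv ℝ (fun y => fderiv ℝ f y 1) x))

def cC (f : ℍ[ℝ] → ℍ[ℝ]) (x : ℍ[ℝ]) : ℍ[ℝ] :=
  (-muC f x 1 / 2) • (1:ℍ[ℝ]) + (muC f x qI / 2) • qI + (muC f x qJ / 2) • qJ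
    + (muC f x qK / 2) • qK

lemma an_app (f : ℍ[ℝ] → ℍ[ℝ]) (x : ℍ[ℝ]) (hf : AnalyticAt ℝ f x) (h : ℍ[ℝ]) :
    AnalyticAt ℝ (fun y => fderiv ℝ f y h) x :=
  ((ContinuousLinearMap.apply ℝ ℍ[ℝ] h).analyticAt _).comp hf.fderiv

lemma N_ne (U : Set ℍ[ℝ]) (f : ℍ[ℝ] → ℍ[ℝ])
    (hD : ∀ x ∈ U, ∃ a b : ℍ[ℝ], a ≠ 0 ∧ b ≠ 0 ∧ ∀ h, fderiv ℝ f x h = a * h * b)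
    (x : ℍ[ℝ]) (hx : x ∈ U) :
    (inner ℝ (fderiv ℝ f x 1) (fderiv ℝ f x 1) : ℝ) ≠ 0 := by
  obtain ⟨a, b, ha, hb, h⟩ := hD x hx
  rw [h]
  simp [ha, hb]

lemma inner_D (U : Set ℍ[ℝ]) (f : ℍ[ℝ] → ℍ[ℝ])
    (hD : ∀ x ∈ U, ∃ a b : ℍ[ℝ], a ≠ 0 ∧ b ≠ 0 ∧ ∀ h, fderiv ℝ f x h = a * h * b)
    (x : ℍ[ℝ]) (hx : x ∈ U) (h k : ℍ[ℝ]) :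
    inner ℝ (fderiv ℝ f x h) (fderiv ℝ f x k)
      = inner ℝ h k * inner ℝ (fderiv ℝ f x 1) (fderiv ℝ f x 1) := by
  obtain ⟨a, b, ha, hb, hh⟩ := hD x hx
  simp only [hh]
  exact conf_inner a b h k

lemma D2_eq (U : Set ℍ[ℝ]) (hU : IsOpen U) (f : ℍ[ℝ] → ℍ[ℝ]) (han : AnalyticOnNhd ℝ f U)
    (hD : ∀ x ∈ U, ∃ a b : ℍ[ℝ], a ≠ 0 ∧ b ≠ 0 ∧ ∀ h, fderiv ℝ f x h = a * h * b)
    (x : ℍ[ℝ]) (hx : x ∈ U) (h l : ℍ[ℝ]) :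
    fderiv ℝ (fun y => fderiv ℝ f y h) x l
      = - fderiv ℝ f x (l * cC f x * h + h * cC f x * l) := by
  have hN := N_ne U f hD x hx
  set N : ℝ := inner ℝ (fderiv ℝ f x 1) (fderiv ℝ f x 1) with hNdef
  have hd : ∀ h, HasFDerivAt (fun y => fderiv ℝ f y h) (fderiv ℝ (fun y => fderiv ℝ f y h) x) x :=
    fun h => (an_app f x (han x hx) h).differentiableAt.hasFDerivAt
  have hm : ∀ l, muC f x l * N
      = inner ℝ (fderiv ℝ (fun y => fderiv ℝ f y 1) x l) (fderiv ℝ f x 1) := by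
    intro l
    simp only [muC, ← hNdef, smul_apply, ContinuousLinearMap.comp_apply,
      innerSL_apply_apply, smul_eq_mul]
    rw [real_inner_comm]
    field_simp
  have hB : ∀ l h k, (inner ℝ (fderiv ℝ (fun y => fderiv ℝ f y h) x l) (fderiv ℝ f x k) : ℝ)
      + inner ℝ (fderiv ℝ (fun y => fderiv ℝ f y k) x l) (fderiv ℝ f x h)
      = inner ℝ h k * (2 * (muC f x l * N)) := by
    intro l h k
    have e1 := (hd h).inner ℝ (hd k)
    have e2 := ((hd 1).inner ℝ (hd 1)).const_mul (inner ℝ h k : ℝ)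
    have ev : (fun y => (inner ℝ (fderiv ℝ f y h) (fderiv ℝ f y k) : ℝ)) =ᶠ[nhds x]
        fun y => inner ℝ h k * inner ℝ (fderiv ℝ f y 1) (fderiv ℝ f y 1) := by
      filter_upwards [hU.mem_nhds hx] with y hy
      exact inner_D U f hD y hy h k
    have e3 := e1.unique (e2.congr_of_eventuallyEq ev)
    have e4 := congrArg (fun L => L l) e3
    simp only [ContinuousLinearMap.comp_apply, ContinuousLinearMap.prod_apply,
      smul_apply, fderivInnerCLM_apply, smul_eq_mul] at e4
    rw [hm]
    have r1 := real_inner_comm (fderiv ℝ f x h) (fderiv ℝ (fun y => fderiv ℝ f y k) x l)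
    have r2 := real_inner_comm (fderiv ℝ f x 1) (fderiv ℝ (fun y => fderiv ℝ f y 1) x l)
    rw [← r1, ← r2] at e4
    linarith
  have hk := koszul (fun l h k => inner ℝ (fderiv ℝ (fun y => fderiv ℝ f y h) x l) (fderiv ℝ f x k))
    (fun l => muC f x l * N) (fun l h k => by rw [sym2 f x (han x hx)]) hB
  rw [← sub_eq_zero, sub_neg_eq_add]
  set v := fderiv ℝ (fun y => fderiv ℝ f y h) x l
      + fderiv ℝ f x (l * cC f x * h + h * cC f x * l) with hv
  have horth : ∀ k, (inner ℝ v (fderiv ℝ f x k) : ℝ) = 0 := by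
    intro k
    rw [hv, inner_add_left, inner_D U f hD x hx]
    have := alg (muC f x) l h k (cC f x) rfl
    have h2 := hk l h k
    rw [h2, ← hNdef]
    linear_combination N * this
  obtain ⟨a, b, ha, hb, hh⟩ := hD x hx
  have := horth (a⁻¹ * v * b⁻¹)
  rw [hh] at this
  have e : a * (a⁻¹ * v * b⁻¹) * b = v := by
    simp only [mul_assoc, inv_mul_cancel₀ hb, mul_one, mul_inv_cancel_left₀ ha]
  rw [e] at this
  exact inner_self_eq_zero.mp this

lemma c_diff (U : Set ℍ[ℝ]) (f : ℍ[ℝ] → ℍ[ℝ]) (han : AnalyticOnNhd ℝ f U)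
    (hD : ∀ x ∈ U, ∃ a b : ℍ[ℝ], a ≠ 0 ∧ b ≠ 0 ∧ ∀ h, fderiv ℝ f x h = a * h * b)
    (x : ℍ[ℝ]) (hx : x ∈ U) : DifferentiableAt ℝ (cC f) x := by
  have hm : ∀ l, DifferentiableAt ℝ (fun y => muC f y l) x := by
    intro l
    have h1 := (an_app f x (han x hx) 1).differentiableAt
    have h2 := (an_app _ x (an_app f x (han x hx) 1) l).differentiableAt
    simp only [muC, smul_apply, ContinuousLinearMap.comp_apply,
      innerSL_apply_apply, smul_eq_mul]
    exact ((h1.inner ℝ h1).inv (N_ne U f hD x hx)).mul (h1.inner ℝ h2)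
  unfold cC
  have t : ∀ l q, DifferentiableAt ℝ (fun y => (muC f y l / 2) • (q : ℍ[ℝ])) x := by
    intro l q
    simp only [div_eq_mul_inv]
    have := (hm l).mul_const (2:ℝ)⁻¹
    exact this.smul_const q
  have t1 : DifferentiableAt ℝ (fun y => (-muC f y 1 / 2) • (1 : ℍ[ℝ])) x := by
    simp only [div_eq_mul_inv]
    have := (hm 1).fun_neg.mul_const (2:ℝ)⁻¹
    exact this.smul_const 1
  exact ((t1.fun_add (t qI qI)).fun_add (t qJ qJ)).fun_add (t qK qK)

lemma c_deriv (U : Set ℍ[ℝ]) (hU : IsOpen U) (f : ℍ[ℝ] → ℍ[ℝ]) (han : AnalyticOnNhd ℝ f U)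
    (hD : ∀ x ∈ U, ∃ a b : ℍ[ℝ], a ≠ 0 ∧ b ≠ 0 ∧ ∀ h, fderiv ℝ f x h = a * h * b)
    (x : ℍ[ℝ]) (hx : x ∈ U) (h : ℍ[ℝ]) :
    fderiv ℝ (cC f) x h = - (cC f x * h * cC f x) := by
  have hc := (c_diff U f han hD x hx).hasFDerivAt
  set c := cC f x with hcdef
  set C := fderiv ℝ (cC f) x with hC
  have hDd : HasFDerivAt (fderiv ℝ f) (fderiv ℝ (fderiv ℝ f) x) x :=
    (han x hx).fderiv.differentiableAt.hasFDerivAt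
  have hDapp : ∀ l k, fderiv ℝ (fderiv ℝ f) x l k
      = - fderiv ℝ f x (l * c * k + k * c * l) := by
    intro l k
    rw [← D2_eq U hU f han hD x hx k l, fderiv_clm_apply hDd.differentiableAt
      (differentiableAt_const k)]
    simp
  have third : ∀ l h k, fderiv ℝ (fun y => fderiv ℝ (fun z => fderiv ℝ f z k) y h) x l
      = fderiv ℝ f x (l * c * (h * c * k + k * c * h) + (h * c * k + k * c * h) * c * l)
        - fderiv ℝ f x (h * C l * k + k * C l * h) := by
    intro l h k
    have ev : (fun y => fderiv ℝ (fun z => fderiv ℝ f z k) y h) =ᶠ[nhds x]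
        fun y => - fderiv ℝ f y (h * cC f y * k + k * cC f y * h) := by
      filter_upwards [hU.mem_nhds hx] with y hy
      exact D2_eq U hU f han hD y hy k h
    have hin : HasFDerivAt (fun y => h * cC f y * k + k * cC f y * h) _ x :=
      ((hc.const_mul h).mul_const' k).add ((hc.const_mul k).mul_const' h)
    have := ((hDd.clm_apply hin).neg).congr_of_eventuallyEq ev
    rw [this.fderiv]
    simp only [neg_apply, add_apply,
      ContinuousLinearMap.comp_apply, ContinuousLinearMap.flip_apply, hDapp,
      smul_apply, smul_eq_mul, MulOpposite.smul_eq_mul_unop,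
      MulOpposite.unop_op, ← hcdef]
    abel
  have inj : ∀ u v, fderiv ℝ f x u = fderiv ℝ f x v → u = v := by
    obtain ⟨a, b, ha, hb, hh⟩ := hD x hx
    intro u v huv
    rw [hh, hh] at huv
    exact mul_left_cancel₀ ha (mul_right_cancel₀ hb huv)
  have hE := rigid (fun l => C l + c * l * c) (by
    intro h l k
    have e := sym2 (fun z => fderiv ℝ f z k) x (an_app f x (han x hx) k) h l
    rw [third, third, ← map_sub, ← map_sub] at e
    have e' := inj _ _ e
    have e2 := sub_eq_zero.mpr e'
    rw [← sub_eq_zero, ← neg_eq_zero, ← e2]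
    noncomm_ring) h
  exact eq_neg_of_add_eq_zero_left hE

lemma const_ball (r : ℝ) (G : ℍ[ℝ] → ℍ[ℝ])
    (hG : ∀ x ∈ Metric.ball (0:ℍ[ℝ]) r, ∃ L : ℍ[ℝ] →L[ℝ] ℍ[ℝ], HasFDerivAt G L x ∧ ∀ k, L k = 0)
    (x : ℍ[ℝ]) (hx : x ∈ Metric.ball (0:ℍ[ℝ]) r) : G x = G 0 := by
  have hr : 0 < r := (norm_nonneg x).trans_lt (by simpa using hx)
  refine Metric.isOpen_ball.is_const_of_fderiv_eq_zero (𝕜 := ℝ)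
    (convex_ball (0:ℍ[ℝ]) r).isPreconnected ?_ ?_ hx (by simpa using hr)
  · intro y hy
    obtain ⟨L, hL, _⟩ := hG y hy
    exact hL.differentiableAt.differentiableWithinAt
  · intro y hy
    obtain ⟨L, hL, h0⟩ := hG y hy
    rw [hL.fderiv]
    ext1 k
    simpa using h0 k

lemma local_form (U : Set ℍ[ℝ]) (hU : IsOpen U) (f : ℍ[ℝ] → ℍ[ℝ])
    (han : AnalyticOnNhd ℝ f U)
    (hD : ∀ x ∈ U, ∃ a b : ℍ[ℝ], a ≠ 0 ∧ b ≠ 0 ∧ ∀ h, fderiv ℝ f x h = a * h * b)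
    (h0 : (0 : ℍ[ℝ]) ∈ U) (hf0 : f 0 = 0)
    (hder : HasFDerivAt f (ContinuousLinearMap.id ℝ ℍ[ℝ]) 0) :
    ∃ c₀ : ℍ[ℝ], ∀ᶠ x in nhds (0:ℍ[ℝ]), f x * (1 + c₀ * x) = x := by
  set c := cC f with hcdef
  have hc : ∀ x ∈ U, HasFDerivAt c (fderiv ℝ c x) x := fun x hx =>
    (c_diff U f han hD x hx).hasFDerivAt
  have hc' : ∀ x ∈ U, ∀ k, fderiv ℝ c x k = -(c x * k * c x) := fun x hx k =>
    c_deriv U hU f han hD x hx k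
  have hDd : ∀ x ∈ U, HasFDerivAt (fderiv ℝ f) (fderiv ℝ (fderiv ℝ f) x) x := fun x hx =>
    (han x hx).fderiv.differentiableAt.hasFDerivAt
  have hDapp : ∀ x ∈ U, ∀ l k, fderiv ℝ (fderiv ℝ f) x l k
      = - fderiv ℝ f x (l * c x * k + k * c x * l) := by
    intro x hx l k
    rw [← D2_eq U hU f han hD x hx k l, fderiv_clm_apply (hDd x hx).differentiableAt
      (differentiableAt_const k)]
    simp
  refine ⟨c 0, ?_⟩
  -- a small ball
  have ev : ∀ᶠ x in nhds (0:ℍ[ℝ]), x ∈ U ∧ 1 - c x * x ≠ 0 ∧ 1 + x * c 0 ≠ 0 := by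
    refine Filter.Eventually.and (hU.mem_nhds h0) ?_
    have c1 : ContinuousAt (fun x => 1 - c x * x) 0 :=
      continuousAt_const.sub ((hc 0 h0).continuousAt.mul continuousAt_id)
    have c2 : ContinuousAt (fun x => 1 + x * c 0) 0 :=
      continuousAt_const.add (continuousAt_id.mul continuousAt_const)
    exact (c1.eventually_ne (by simp)).and (c2.eventually_ne (by simp))
  obtain ⟨r, hr, hball⟩ := Metric.eventually_nhds_iff_ball.mp ev
  have id' : ∀ x : ℍ[ℝ], HasFDerivAt (fun y : ℍ[ℝ] => y) (ContinuousLinearMap.id ℝ ℍ[ℝ]) x :=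
    fun x => hasFDerivAt_id x
  -- c = (1 - c x) c₀
  have k1 : ∀ x ∈ Metric.ball (0:ℍ[ℝ]) r, (1 - c x * x)⁻¹ * c x = c 0 := by
    intro x hx
    have := const_ball r (fun x => (1 - c x * x)⁻¹ * c x) ?_ x hx
    · simpa using this
    intro y hy
    obtain ⟨hyU, hy1, hy2⟩ := hball y hy
    have ht : HasFDerivAt (fun x => 1 - c x * x) _ y := ((hc y hyU).mul' (id' y)).const_sub 1
    have hti : HasFDerivAt (fun x => (1 - c x * x)⁻¹) _ y := (hasFDerivAt_inv' hy1).comp y ht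
    refine ⟨_, hti.mul' (hc y hyU), ?_⟩
    intro k
    simp only [neg_apply, add_apply,
      ContinuousLinearMap.comp_apply, hc' y hyU, ContinuousLinearMap.mulLeftRight_apply,
      smul_apply, smul_eq_mul, MulOpposite.smul_eq_mul_unop,
      MulOpposite.unop_op, ContinuousLinearMap.id_apply]
    have e : c y * k + -(c y * k * c y) * y = c y * k * (1 - c y * y) := by noncomm_ring
    rw [e]
    have e2 : (1 - c y * y)⁻¹ * -(c y * k * (1 - c y * y)) * (1 - c y * y)⁻¹
        = -((1 - c y * y)⁻¹ * (c y * k)) := by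
      rw [mul_neg, neg_mul, mul_assoc, mul_assoc (c y * k), mul_inv_cancel₀ hy1, mul_one]
    rw [e2]
    noncomm_ring
  have k2 : ∀ x ∈ Metric.ball (0:ℍ[ℝ]) r, c x * (1 + x * c 0) = c 0 := by
    intro x hx
    obtain ⟨hyU, hy1, hy2⟩ := hball x hx
    have e : c x = (1 - c x * x) * c 0 := by
      rw [← k1 x hx, mul_inv_cancel_left₀ hy1]
    calc c x * (1 + x * c 0) = c x + c x * x * c 0 := by noncomm_ring
      _ = (1 - c x * x) * c 0 + c x * x * c 0 := by rw [← e]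
      _ = c 0 := by noncomm_ring
  have k3 : ∀ x ∈ Metric.ball (0:ℍ[ℝ]) r, (1 + c 0 * x) * c x = c 0 := by
    intro x hx
    obtain ⟨hyU, hy1, hy2⟩ := hball x hx
    apply mul_right_cancel₀ hy2
    rw [mul_assoc, k2 x hx]
    noncomm_ring
  have k4 : ∀ x ∈ Metric.ball (0:ℍ[ℝ]) r, ∀ h,
      fderiv ℝ f x ((1 + x * c 0) * h * (1 + c 0 * x)) = h := by
    intro x hx h
    have := const_ball r (fun x => fderiv ℝ f x ((1 + x * c 0) * h * (1 + c 0 * x))) ?_ x hx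
    · simpa [hder.fderiv] using this
    intro y hy
    obtain ⟨hyU, hy1, hy2⟩ := hball y hy
    have hl : HasFDerivAt (fun x : ℍ[ℝ] => 1 + x * c 0) _ y := ((id' y).mul_const' (c 0)).const_add 1
    have hrr : HasFDerivAt (fun x : ℍ[ℝ] => 1 + c 0 * x) _ y := ((id' y).const_mul (c 0)).const_add 1
    have hin : HasFDerivAt (fun x : ℍ[ℝ] => (1 + x * c 0) * h * (1 + c 0 * x)) _ y :=
      (hl.mul_const' h).mul' hrr
    refine ⟨_, (hDd y hyU).clm_apply hin, ?_⟩
    intro k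
    simp only [add_apply,
      ContinuousLinearMap.comp_apply, ContinuousLinearMap.flip_apply, hDapp y hyU,
      smul_apply, smul_eq_mul, MulOpposite.smul_eq_mul_unop,
      MulOpposite.unop_op, ContinuousLinearMap.id_apply]
    rw [← map_neg, ← map_add]
    convert map_zero (fderiv ℝ f y) using 2
    have e2 : (1 + y * c 0) * h * (1 + c 0 * y) * c y * k = (1 + y * c 0) * h * (c 0 * k) := by
      rw [mul_assoc _ (1 + c 0 * y), k3 y hy, mul_assoc]
    rw [e2]
    rw [show k * c y * ((1 + y * c 0) * h * (1 + c 0 * y))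
      = k * (c y * (1 + y * c 0)) * h * (1 + c 0 * y) by simp only [mul_assoc], k2 y hy]
    noncomm_ring
  have k5 : ∀ x ∈ Metric.ball (0:ℍ[ℝ]) r, (1 + x * c 0) * (1 - x * c x) = 1 := by
    intro x hx
    have : (1 + x * c 0) * (1 - x * c x) = 1 + x * c 0 - x * ((1 + c 0 * x) * c x) := by
      noncomm_ring
    rw [this, k3 x hx]; noncomm_ring
  have k6 : ∀ x ∈ Metric.ball (0:ℍ[ℝ]) r, (1 - c x * x) * (1 + c 0 * x) = 1 := by
    intro x hx
    have : (1 - c x * x) * (1 + c 0 * x) = 1 + c 0 * x - (c x * (1 + x * c 0)) * x := by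
      noncomm_ring
    rw [this, k2 x hx]; noncomm_ring
  have k7 : ∀ x ∈ Metric.ball (0:ℍ[ℝ]) r, ∀ h,
      fderiv ℝ f x h = (1 - x * c x) * h * (1 - c x * x) := by
    intro x hx h
    have := k4 x hx ((1 - x * c x) * h * (1 - c x * x))
    rw [show (1 + x * c 0) * ((1 - x * c x) * h * (1 - c x * x)) * (1 + c 0 * x)
      = ((1 + x * c 0) * (1 - x * c x)) * h * ((1 - c x * x) * (1 + c 0 * x)) by
        simp only [mul_assoc], k5 x hx, k6 x hx, one_mul, mul_one] at this
    exact this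
  have k8 : ∀ x ∈ Metric.ball (0:ℍ[ℝ]) r, f x - (x - x * c x * x) = 0 := by
    intro x hx
    have := const_ball r (fun x => f x - (x - x * c x * x)) ?_ x hx
    · simpa [hf0] using this
    intro y hy
    obtain ⟨hyU, hy1, hy2⟩ := hball y hy
    have hq : HasFDerivAt (fun x => x * c x * x) _ y := ((id' y).mul' (hc y hyU)).mul' (id' y)
    refine ⟨_, ((han y hyU).differentiableAt.hasFDerivAt).sub ((id' y).sub hq), ?_⟩
    intro k
    simp only [add_apply, sub_apply, hc' y hyU, k7 y hy,
      smul_apply, smul_eq_mul, MulOpposite.smul_eq_mul_unop, Pi.mul_apply,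
      MulOpposite.unop_op, ContinuousLinearMap.id_apply]
    noncomm_ring
  filter_upwards [Metric.ball_mem_nhds (0:ℍ[ℝ]) hr] with x hx
  rw [sub_eq_zero.mp (k8 x hx), show x - x * c x * x = x * (1 - c x * x) by noncomm_ring,
    mul_assoc, k6 x hx, mul_one]

end

/-- Paper's Theorem 3.30 (Cartan-type uniqueness) over `ℍ`: a real-analytic
pseudoconformal self-surjection of a bounded domain containing `0`, fixing `0`
with derivative the identity at `0`, is the identity. -/
theorem stmt_12 (U : Set ℍ[ℝ]) (hU : IsOpen U) (hUb : Bornology.IsBounded U)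
    (hUc : IsConnected U) (h0 : (0 : ℍ[ℝ]) ∈ U)
    (f : ℍ[ℝ] → ℍ[ℝ]) (hmaps : Set.MapsTo f U U) (hsurj : Set.SurjOn f U U)
    (han : AnalyticOnNhd ℝ f U) (hpc : ∀ ξ ∈ U, Pseudoconformal f ξ)
    (hf0 : f 0 = 0)
    (hder : HasFDerivAt f (ContinuousLinearMap.id ℝ ℍ[ℝ]) 0) :
    ∀ z ∈ U, f z = z := by
  have hD : ∀ x ∈ U, ∃ a b : ℍ[ℝ], a ≠ 0 ∧ b ≠ 0 ∧ ∀ h, fderiv ℝ f x h = a * h * b := by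
    intro x hx
    obtain ⟨A, a, b, ha, hb, hA, h⟩ := hpc x hx
    exact ⟨a, b, ha, hb, by rw [hA.fderiv]; exact h⟩
  obtain ⟨c, hc⟩ := local_form U hU f han hD h0 hf0 hder
  have hglob : ∀ x ∈ U, f x * (1 + c * x) = x := by
    have a2 : AnalyticOnNhd ℝ (fun x : ℍ[ℝ] => x) U := analyticOnNhd_id
    have a1 : AnalyticOnNhd ℝ (fun x => f x * (1 + c * x)) U :=
      han.mul (analyticOnNhd_const.add (analyticOnNhd_const.mul a2))
    exact fun x hx => a1.eqOn_of_preconnected_of_eventuallyEq a2 hUc.isPreconnected h0 hc hx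
  have hit : ∀ n : ℕ, ∀ x ∈ U, ∃ y ∈ U, y * (1 + (n:ℝ) • (c * x)) = x := by
    intro n
    induction n with
    | zero => intro x hx; exact ⟨x, hx, by simp⟩
    | succ n ih =>
      intro x hx
      obtain ⟨y, hy, e⟩ := ih (f x) (hmaps hx)
      refine ⟨y, hy, ?_⟩
      calc y * (1 + ((n + 1 : ℕ) : ℝ) • (c * x))
          = y * ((1 + c * x) + (n:ℝ) • (c * x)) := by push_cast; rw [add_smul, one_smul]; abel_nf
        _ = y * ((1 + c * x) + (n:ℝ) • (c * (f x * (1 + c * x)))) := by rw [hglob x hx]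
        _ = (y * (1 + (n:ℝ) • (c * f x))) * (1 + c * x) := by
          rw [mul_assoc, add_mul (1:ℍ[ℝ]), one_mul, smul_mul_assoc, mul_assoc c]
        _ = x := by rw [e, hglob x hx]
  have hc0 : c = 0 := by
    by_contra hne
    have ht : Filter.Tendsto (fun n : ℕ => ((n:ℝ)⁻¹) • (-c⁻¹)) Filter.atTop (nhds 0) := by
      have := (tendsto_inv_atTop_nhds_zero_nat (𝕜 := ℝ)).smul_const (-c⁻¹)
      simpa using this
    obtain ⟨n, hn, hn1⟩ := ((ht.eventually (hU.mem_nhds h0)).and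
      (Filter.eventually_gt_atTop 0)).exists
    have hn' : (n:ℝ) ≠ 0 := by exact_mod_cast hn1.ne'
    obtain ⟨y, -, e⟩ := hit n _ hn
    rw [mul_smul_comm, smul_smul, mul_inv_cancel₀ hn', one_smul, mul_neg, mul_inv_cancel₀ hne,
      add_neg_cancel, mul_zero] at e
    have := e.symm
    rw [smul_eq_zero] at this
    simp [hn', hne] at this
  intro z hz
  simpa [hc0] using hglob z hz
end

section
/- Let B := {z ∈ ℍ : ‖z‖ < 1} be the open unit ball of ℍ. Suppose g : B → B is a bijection of B onto itself, is real-analytic on B (as a map of ℝ⁴), is pseudoconformal at every point of B, and satisfies g(0) = 0. Then there exist quaternions u, v with ‖u‖ = ‖v‖ = 1 such that g(z) = u * z * v for all z ∈ B. (The stabilizer-of-the-origin step in the paper's Theorem 3.37, for one quaternion variable.) -/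
open scoped Quaternion

lemma alg_e (e : ℍ[ℝ] → ℍ[ℝ])
    (he : ∀ h k l, h * e l * k + k * e l * h = l * e h * k + k * e h * l) (l : ℍ[ℝ]) :
    e l = 0 := by
  have two : ∀ l, e l + e l = l * e 1 + e 1 * l := by
    intro l; have := he 1 1 l; simpa using this
  obtain ⟨w, hw⟩ : ∃ w, w = e 1 := ⟨_, rfl⟩
  have tw : ∀ l, e l = (2⁻¹:ℝ) • (l * w + w * l) := by
    intro l; rw [hw, ← two, ← two_smul ℝ, smul_smul]; norm_num
  have h1 : ∀ l, e l * l + l * e l = l * w * l + l * w * l := by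
    intro l; have := he 1 l l; rw [← hw] at this; simpa using this
  obtain ⟨I, hI⟩ : ∃ I : ℍ[ℝ], I = ⟨0,1,0,0⟩ := ⟨_, rfl⟩
  obtain ⟨J, hJ⟩ : ∃ I : ℍ[ℝ], I = ⟨0,0,1,0⟩ := ⟨_, rfl⟩
  have hi := h1 I
  have hj := h1 J
  have hij := he I I J
  rw [tw] at hi hj
  rw [tw, tw I] at hij
  have : w = 0 := by
    have a0 : I.re = 0 := by rw [hI]
    have a1 : I.imI = 1 := by rw [hI]
    have a2 : I.imJ = 0 := by rw [hI]
    have a3 : I.imK = 0 := by rw [hI]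
    have b0 : J.re = 0 := by rw [hJ]
    have b1 : J.imI = 0 := by rw [hJ]
    have b2 : J.imJ = 1 := by rw [hJ]
    have b3 : J.imK = 0 := by rw [hJ]
    rw [Quaternion.ext_iff] at hi hj hij ⊢
    simp [a0, a1, a2, a3, b0, b1, b2, b3] at hi hj hij ⊢
    clear tw h1 two he
    refine ⟨?_, ?_, ?_, ?_⟩ <;> linarith [hi.1, hi.2, hj.1, hj.2, hij.1, hij.2]
  rw [tw, this]; simp

lemma alg_P (c h k v : ℍ[ℝ]) (hv : c = star v) :
    h * c * k + k * c * h
      = (2 * inner ℝ v h) • k + (2 * inner ℝ v k) • h - (2 * inner ℝ h k) • v := by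
  subst hv
  simp only [Quaternion.inner_def]
  ext <;> simp <;> ring

lemma inner_ab (a b h k : ℍ[ℝ]) :
    inner ℝ (a*h*b) (a*k*b) = (‖a‖*‖b‖)^2 * inner ℝ h k := by
  rw [mul_pow, pow_two, pow_two, ← Quaternion.normSq_eq_norm_mul_self,
    ← Quaternion.normSq_eq_norm_mul_self]
  simp only [Quaternion.inner_def, Quaternion.normSq_def']
  simp
  ring

/-- squared conformal factor -/
noncomputable def NN (g : ℍ[ℝ] → ℍ[ℝ]) (x : ℍ[ℝ]) : ℝ :=
  inner ℝ (fderiv ℝ g x 1) (fderiv ℝ g x 1)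

/-- the log-gradient of the conformal factor, conjugated and halved -/
noncomputable def CC (g : ℍ[ℝ] → ℍ[ℝ]) (x : ℍ[ℝ]) : ℍ[ℝ] :=
  star ((4 * NN g x)⁻¹ • (InnerProductSpace.toDual ℝ ℍ[ℝ]).symm (fderiv ℝ (NN g) x))

section
variable {g : ℍ[ℝ] → ℍ[ℝ]}

lemma pc_inner {x : ℍ[ℝ]} (h : Pseudoconformal g x) (u v : ℍ[ℝ]) :
    inner ℝ (fderiv ℝ g x u) (fderiv ℝ g x v) = NN g x * inner ℝ u v := by
  obtain ⟨A, a, b, ha, hb, hA, h⟩ := h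
  rw [NN, hA.fderiv, h, h, h, inner_ab, inner_ab]
  simp

lemma pc_pos {x : ℍ[ℝ]} (h : Pseudoconformal g x) : 0 < NN g x := by
  obtain ⟨A, a, b, ha, hb, hA, h⟩ := h
  rw [NN, hA.fderiv, h, inner_ab]
  have := norm_pos_iff.2 ha
  have := norm_pos_iff.2 hb
  simp [Quaternion.inner_def]
  positivity

lemma pc_inj {x : ℍ[ℝ]} (h : Pseudoconformal g x) {u v : ℍ[ℝ]}
    (huv : fderiv ℝ g x u = fderiv ℝ g x v) : u = v := by
  obtain ⟨A, a, b, ha, hb, hA, h⟩ := h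
  rw [hA.fderiv, h, h] at huv
  exact mul_left_cancel₀ ha (mul_right_cancel₀ hb huv)

lemma pc_ext {x : ℍ[ℝ]} (h : Pseudoconformal g x) {u v : ℍ[ℝ]}
    (huv : ∀ k, inner ℝ u (fderiv ℝ g x k) = inner ℝ v (fderiv ℝ g x k)) : u = v := by
  obtain ⟨A, a, b, ha, hb, hA, h⟩ := h
  rw [hA.fderiv] at huv
  refine ext_inner_right ℝ fun w => ?_
  have := huv (a⁻¹ * w * b⁻¹)
  rw [h] at this
  have e : a * (a⁻¹ * w * b⁻¹) * b = w := by
    simp only [mul_assoc, inv_mul_cancel₀ hb, mul_one]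
    rw [← mul_assoc, mul_inv_cancel₀ ha, one_mul]
  rwa [e] at this

lemma NN_an {x : ℍ[ℝ]} (h : AnalyticAt ℝ g x) : AnalyticAt ℝ (NN g) x := by
  have h1 : AnalyticAt ℝ (fun x => fderiv ℝ g x 1) x :=
    (ContinuousLinearMap.apply ℝ ℍ[ℝ] (1 : ℍ[ℝ])).analyticAt _ |>.comp h.fderiv
  exact ((h1.contDiffAt (n := ⊤)).inner ℝ h1.contDiffAt).analyticAt

lemma CC_diff {x : ℍ[ℝ]} (h : AnalyticAt ℝ g x) (hp : Pseudoconformal g x) :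
    DifferentiableAt ℝ (CC g) x := by
  have h1 := (NN_an h).differentiableAt
  have h2 := (NN_an h).fderiv.differentiableAt
  have h3 := (pc_pos hp).ne'
  have h4 : DifferentiableAt ℝ (fun x => (4 * NN g x)⁻¹ •
      (InnerProductSpace.toDual ℝ ℍ[ℝ]).symm (fderiv ℝ (NN g) x)) x := by
    refine DifferentiableAt.smul (DifferentiableAt.inv (h1.const_mul 4) (by positivity)) ?_
    exact ((InnerProductSpace.toDual ℝ ℍ[ℝ]).symm.toContinuousLinearEquiv.differentiableAt).comp x h2
  let S : ℍ[ℝ] →ₗ[ℝ] ℍ[ℝ] := { toFun := star, map_add' := star_add, map_smul' := fun r q => by simp }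
  exact (LinearMap.toContinuousLinearMap S).differentiableAt.comp x h4

lemma symm2 {E : Type*} [NormedAddCommGroup E] [NormedSpace ℝ E] {f : ℍ[ℝ] → E} {x : ℍ[ℝ]}
    [CompleteSpace E] (h : AnalyticAt ℝ f x) (u v : ℍ[ℝ]) :
    fderiv ℝ (fderiv ℝ f) x u v = fderiv ℝ (fderiv ℝ f) x v u :=
  (ContDiffAt.isSymmSndFDerivAt_of_omega h.contDiffAt) u v

lemma hasL {x : ℍ[ℝ]} (h : AnalyticAt ℝ g x) (k : ℍ[ℝ]) :
    HasFDerivAt (fun x => fderiv ℝ g x k) ((fderiv ℝ (fderiv ℝ g) x).flip k) x := by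
  have := h.fderiv.differentiableAt.hasFDerivAt.clm_apply (hasFDerivAt_const k x)
  simpa using this

lemma second (han : AnalyticOnNhd ℝ g (Metric.ball (0 : ℍ[ℝ]) 1))
    (hpc : ∀ ξ ∈ Metric.ball (0 : ℍ[ℝ]) 1, Pseudoconformal g ξ)
    {x : ℍ[ℝ]} (hx : x ∈ Metric.ball (0 : ℍ[ℝ]) 1) (h k : ℍ[ℝ]) :
    fderiv ℝ (fderiv ℝ g) x h k = fderiv ℝ g x (h * CC g x * k + k * CC g x * h) := by
  have key : ∀ l h k, inner ℝ (fderiv ℝ (fderiv ℝ g) x l h) (fderiv ℝ g x k)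
      + inner ℝ (fderiv ℝ g x h) (fderiv ℝ (fderiv ℝ g) x l k)
      = fderiv ℝ (NN g) x l * inner ℝ h k := by
    intro l h k
    have e : (fun x => inner ℝ (fderiv ℝ g x h) (fderiv ℝ g x k)) =ᶠ[nhds x]
        fun x => NN g x * inner ℝ h k :=
      Filter.eventually_of_mem (Metric.isOpen_ball.mem_nhds hx) fun y hy => pc_inner (hpc y hy) h k
    have d1 := (hasL (han x hx) h).inner ℝ (hasL (han x hx) k)
    have d2 := ((NN_an (han x hx)).differentiableAt.hasFDerivAt.mul_const (inner ℝ h k))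
    have := congrArg (fun T => T l) ((d1.congr_of_eventuallyEq e.symm).unique d2)
    simp [fderivInnerCLM_apply] at this
    linarith
  have sy := symm2 (han x hx)
  refine pc_ext (hpc x hx) fun l => ?_
  have k1 := key h k l
  have k2 := key k l h
  have k3 := key l h k
  rw [sy l h, sy l k] at k3
  rw [sy k h] at k2
  rw [pc_inner (hpc x hx)]
  have hN := (pc_pos (hpc x hx)).ne'
  rw [alg_P (CC g x) h k _ rfl]
  simp only [inner_sub_left, inner_add_left, real_inner_smul_left,
    InnerProductSpace.toDual_symm_apply]
  field_simp
  simp only [real_inner_comm] at k1 k2 k3 ⊢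
  linarith

lemma third (han : AnalyticOnNhd ℝ g (Metric.ball (0 : ℍ[ℝ]) 1))
    (hpc : ∀ ξ ∈ Metric.ball (0 : ℍ[ℝ]) 1, Pseudoconformal g ξ)
    {x : ℍ[ℝ]} (hx : x ∈ Metric.ball (0 : ℍ[ℝ]) 1) (l : ℍ[ℝ]) :
    fderiv ℝ (CC g) x l = CC g x * l * CC g x := by
  have hC := (CC_diff (han x hx) (hpc x hx)).hasFDerivAt
  have key : ∀ l h k, fderiv ℝ (fderiv ℝ (fderiv ℝ g)) x l h k
      = fderiv ℝ g x ((l * CC g x * (h * CC g x * k + k * CC g x * h)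
        + (h * CC g x * k + k * CC g x * h) * CC g x * l)
        + (h * fderiv ℝ (CC g) x l * k + k * fderiv ℝ (CC g) x l * h)) := by
    intro l h k
    have e : (fun x => fderiv ℝ (fderiv ℝ g) x h k) =ᶠ[nhds x]
        fun x => fderiv ℝ g x (h * CC g x * k + k * CC g x * h) :=
      Filter.eventually_of_mem (Metric.isOpen_ball.mem_nhds hx) fun y hy => second han hpc hy h k
    have d1 := (((han x hx).fderiv.fderiv.differentiableAt.hasFDerivAt.clm_apply
      (hasFDerivAt_const h x))).clm_apply (hasFDerivAt_const k x)
    have d2 := (han x hx).fderiv.differentiableAt.hasFDerivAt.clm_apply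
      (((hC.const_mul h).mul_const' k).add ((hC.const_mul k).mul_const' h))
    have := congrArg (fun T => T l) ((d1.congr_of_eventuallyEq e.symm).unique d2)
    simp at this
    rw [this, second han hpc hx, second han hpc hx, ← map_add, ← map_add, ← map_add]
    congr 1
    noncomm_ring
  have := alg_e (fun l => fderiv ℝ (CC g) x l - CC g x * l * CC g x) ?_ l
  · exact sub_eq_zero.1 this
  intro h k l
  have e : fderiv ℝ (fderiv ℝ (fderiv ℝ g)) x l h k = fderiv ℝ (fderiv ℝ (fderiv ℝ g)) x h l k := by
    rw [symm2 (han x hx).fderiv l h]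
  rw [key, key] at e
  have := pc_inj (hpc x hx) e
  rw [← sub_eq_zero] at this ⊢
  rw [← this]
  noncomm_ring


lemma ray_mem {x : ℍ[ℝ]} (hx : x ∈ Metric.ball (0 : ℍ[ℝ]) 1) {t : ℝ} (ht : t ∈ Set.Icc (0:ℝ) 1) :
    t • x ∈ Metric.ball (0 : ℍ[ℝ]) 1 := by
  rw [mem_ball_zero_iff] at *
  rw [norm_smul, Real.norm_of_nonneg ht.1]
  nlinarith [ht.1, ht.2, norm_nonneg x]

lemma ray_deriv (x : ℍ[ℝ]) (t : ℝ) : HasDerivAt (fun t : ℝ => t • x) x t := by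
  simpa using (hasDerivAt_id t).smul_const x

lemma rayC (han : AnalyticOnNhd ℝ g (Metric.ball (0 : ℍ[ℝ]) 1))
    (hpc : ∀ ξ ∈ Metric.ball (0 : ℍ[ℝ]) 1, Pseudoconformal g ξ)
    {x : ℍ[ℝ]} (hx : x ∈ Metric.ball (0 : ℍ[ℝ]) 1) {t : ℝ} (ht : t ∈ Set.Icc (0:ℝ) 1) :
    HasDerivAt (fun t : ℝ => CC g (t • x)) (CC g (t • x) * x * CC g (t • x)) t := by
  have hm := ray_mem hx ht
  have := (CC_diff (han _ hm) (hpc _ hm)).hasFDerivAt.comp_hasDerivAt t (ray_deriv x t)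
  rwa [third han hpc hm] at this

lemma rayL (han : AnalyticOnNhd ℝ g (Metric.ball (0 : ℍ[ℝ]) 1))
    (hpc : ∀ ξ ∈ Metric.ball (0 : ℍ[ℝ]) 1, Pseudoconformal g ξ)
    {x : ℍ[ℝ]} (hx : x ∈ Metric.ball (0 : ℍ[ℝ]) 1) {t : ℝ} (ht : t ∈ Set.Icc (0:ℝ) 1)
    {m : ℝ → ℍ[ℝ]} {m' : ℍ[ℝ]} (hm : HasDerivAt m m' t) :
    HasDerivAt (fun t : ℝ => fderiv ℝ g (t • x) (m t))
      (fderiv ℝ g (t • x) (x * CC g (t • x) * m t + m t * CC g (t • x) * x + m')) t := by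
  have hb := ray_mem hx ht
  have h1 := (han _ hb).fderiv.differentiableAt.hasFDerivAt.comp_hasDerivAt t (ray_deriv x t)
  have := h1.clm_apply hm
  rw [map_add, ← second han hpc hb]
  exact this

lemma lin_zero {y C : ℝ → ℍ[ℝ]} {y' : ℝ → ℍ[ℝ]} (hy : ∀ t ∈ Set.Icc (0:ℝ) 1, HasDerivAt y (y' t) t)
    (hC : ContinuousOn C (Set.Icc (0:ℝ) 1)) (h0 : y 0 = 0)
    (hb : ∀ t ∈ Set.Icc (0:ℝ) 1, ‖y' t‖ ≤ ‖C t‖ * ‖y t‖) : ∀ t ∈ Set.Icc (0:ℝ) 1, y t = 0 := by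
  obtain ⟨K, hK⟩ := isCompact_Icc.exists_bound_of_continuousOn hC
  refine eq_zero_of_abs_deriv_le_mul_abs_self_of_eq_zero_right (f' := y') (K := K)
    (fun t ht => (hy t ht).continuousAt.continuousWithinAt)
    (fun t ht => (hy t ⟨ht.1, ht.2.le⟩).hasDerivWithinAt) h0 fun t ht => ?_
  have ht' : t ∈ Set.Icc (0:ℝ) 1 := ⟨ht.1, ht.2.le⟩
  exact (hb t ht').trans (mul_le_mul_of_nonneg_right (hK t ht') (norm_nonneg _))

lemma rayC1 (han : AnalyticOnNhd ℝ g (Metric.ball (0 : ℍ[ℝ]) 1))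
    (hpc : ∀ ξ ∈ Metric.ball (0 : ℍ[ℝ]) 1, Pseudoconformal g ξ)
    {x : ℍ[ℝ]} (hx : x ∈ Metric.ball (0 : ℍ[ℝ]) 1) :
    ∀ t ∈ Set.Icc (0:ℝ) 1, CC g (t • x) * (1 - (t • x) * CC g 0) - CC g 0 = 0 := by
  refine lin_zero (C := fun t => CC g (t • x) * x)
    (y' := fun t => CC g (t • x) * x * (CC g (t • x) * (1 - (t • x) * CC g 0) - CC g 0))
    ?_ ?_ (by simp) ?_
  · intro t ht
    have := ((rayC han hpc hx ht).mul (((ray_deriv x t).mul_const (CC g 0)).const_sub 1)).sub_const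
      (CC g 0)
    refine this.congr_deriv ?_
    noncomm_ring
  · exact fun t ht => ((rayC han hpc hx ht).mul_const x).continuousAt.continuousWithinAt
  · intro t ht
    exact norm_mul_le _ _

lemma rayC2 (han : AnalyticOnNhd ℝ g (Metric.ball (0 : ℍ[ℝ]) 1))
    (hpc : ∀ ξ ∈ Metric.ball (0 : ℍ[ℝ]) 1, Pseudoconformal g ξ)
    {x : ℍ[ℝ]} (hx : x ∈ Metric.ball (0 : ℍ[ℝ]) 1) :
    ∀ t ∈ Set.Icc (0:ℝ) 1, (1 - CC g 0 * (t • x)) * CC g (t • x) - CC g 0 = 0 := by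
  refine lin_zero (C := fun t => x * CC g (t • x))
    (y' := fun t => ((1 - CC g 0 * (t • x)) * CC g (t • x) - CC g 0) * (x * CC g (t • x)))
    ?_ ?_ (by simp) ?_
  · intro t ht
    have := (((((ray_deriv x t).const_mul (CC g 0)).const_sub 1)).mul (rayC han hpc hx ht)).sub_const
      (CC g 0)
    refine this.congr_deriv ?_
    noncomm_ring
  · exact fun t ht => ((rayC han hpc hx ht).const_mul x).continuousAt.continuousWithinAt
  · intro t ht
    rw [mul_comm]
    exact norm_mul_le _ _

lemma rayL1 (han : AnalyticOnNhd ℝ g (Metric.ball (0 : ℍ[ℝ]) 1))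
    (hpc : ∀ ξ ∈ Metric.ball (0 : ℍ[ℝ]) 1, Pseudoconformal g ξ)
    {x : ℍ[ℝ]} (hx : x ∈ Metric.ball (0 : ℍ[ℝ]) 1) (h : ℍ[ℝ]) :
    fderiv ℝ g x ((1 - x * CC g 0) * h * (1 - CC g 0 * x)) = fderiv ℝ g 0 h := by
  have hd : ∀ t ∈ Set.Icc (0:ℝ) 1, HasDerivAt (fun t : ℝ => fderiv ℝ g (t • x)
      ((1 - (t • x) * CC g 0) * h * (1 - CC g 0 * (t • x)))) 0 t := by
    intro t ht
    have hm := (((((ray_deriv x t).mul_const (CC g 0)).const_sub 1)).mul_const h).mul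
      (((ray_deriv x t).const_mul (CC g 0)).const_sub 1)
    refine (rayL han hpc hx ht hm).congr_deriv ?_
    have e1 := sub_eq_zero.1 (rayC1 han hpc hx t ht)
    have e2 := sub_eq_zero.1 (rayC2 han hpc hx t ht)
    refine (congrArg _ ?_).trans (map_zero (fderiv ℝ g (t • x)))
    simp only [Pi.mul_apply]
    have f1 : x * CC g (t • x) * ((1 - (t • x) * CC g 0) * h * (1 - CC g 0 * (t • x)))
      = x * (CC g (t • x) * (1 - (t • x) * CC g 0)) * h * (1 - CC g 0 * (t • x)) := by
      simp only [mul_assoc]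
    have f2 : ((1 - (t • x) * CC g 0) * h * (1 - CC g 0 * (t • x))) * CC g (t • x) * x
      = (1 - (t • x) * CC g 0) * h * ((1 - CC g 0 * (t • x)) * CC g (t • x)) * x := by
      simp only [mul_assoc]
    rw [f1, f2, e1, e2]
    generalize t • x = q
    noncomm_ring
  have := constant_of_has_deriv_right_zero (fun t ht => (hd t ht).continuousAt.continuousWithinAt)
    (fun t ht => (hd t ⟨ht.1, ht.2.le⟩).hasDerivWithinAt) 1 (by simp)
  simpa using this

lemma rayg (han : AnalyticOnNhd ℝ g (Metric.ball (0 : ℍ[ℝ]) 1))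
    (hpc : ∀ ξ ∈ Metric.ball (0 : ℍ[ℝ]) 1, Pseudoconformal g ξ)
    {x : ℍ[ℝ]} (hx : x ∈ Metric.ball (0 : ℍ[ℝ]) 1) (h0 : g 0 = 0) :
    g x = fderiv ℝ g x (x - x * CC g 0 * x) := by
  have hd : ∀ t ∈ Set.Icc (0:ℝ) 1, HasDerivAt (fun t : ℝ => g (t • x) - fderiv ℝ g (t • x)
      ((t • x) - (t • x) * CC g 0 * (t • x))) 0 t := by
    intro t ht
    have hm := (ray_deriv x t).sub (((ray_deriv x t).mul_const (CC g 0)).mul (ray_deriv x t))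
    have hg := (han _ (ray_mem hx ht)).differentiableAt.hasFDerivAt.comp_hasDerivAt t (ray_deriv x t)
    refine (hg.sub (rayL han hpc hx ht hm)).congr_deriv ?_
    have e1 := sub_eq_zero.1 (rayC1 han hpc hx t ht)
    have e2 := sub_eq_zero.1 (rayC2 han hpc hx t ht)
    rw [← map_sub]
    refine (congrArg _ ?_).trans (map_zero (fderiv ℝ g (t • x)))
    have f1 : x * CC g (t • x) * ((t • x) - (t • x) * CC g 0 * (t • x))
      = x * (CC g (t • x) * (1 - (t • x) * CC g 0)) * (t • x) := by
      generalize CC g (t • x) = p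
      generalize t • x = q
      noncomm_ring
    have f2 : ((t • x) - (t • x) * CC g 0 * (t • x)) * CC g (t • x) * x
      = (t • x) * ((1 - CC g 0 * (t • x)) * CC g (t • x)) * x := by
      generalize CC g (t • x) = p
      generalize t • x = q
      noncomm_ring
    simp only [Pi.sub_apply, Pi.mul_apply]
    rw [f1, f2, e1, e2]
    noncomm_ring
  have := constant_of_has_deriv_right_zero (fun t ht => (hd t ht).continuousAt.continuousWithinAt)
    (fun t ht => (hd t ⟨ht.1, ht.2.le⟩).hasDerivWithinAt) 1 (by simp)
  simp [h0] at this
  exact sub_eq_zero.1 (by simpa using this)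

lemma gform (han : AnalyticOnNhd ℝ g (Metric.ball (0 : ℍ[ℝ]) 1))
    (hpc : ∀ ξ ∈ Metric.ball (0 : ℍ[ℝ]) 1, Pseudoconformal g ξ)
    (h0 : g 0 = 0) {x : ℍ[ℝ]} (hx : x ∈ Metric.ball (0 : ℍ[ℝ]) 1) :
    1 - CC g 0 * x ≠ 0 ∧ g x = fderiv ℝ g 0 (x * (1 - CC g 0 * x)⁻¹) := by
  have hne : 1 - CC g 0 * x ≠ 0 := by
    intro h
    have := rayC2 han hpc hx 1 (by simp)
    simp only [one_smul] at this
    rw [h] at this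
    simp at this
    simp [this] at h
  refine ⟨hne, ?_⟩
  rw [rayg han hpc hx h0, ← rayL1 han hpc hx]
  congr 1
  simp only [mul_assoc, inv_mul_cancel₀ hne]
  noncomm_ring

end

lemma final_alg (c : ℍ[ℝ]) (m : ℝ) (hm : 0 < m)
    (h1 : ∀ x : ℍ[ℝ], ‖x‖ < 1 → m * ‖x‖ < ‖1 - c * x‖)
    (h2 : ∀ w : ℍ[ℝ], m * ‖w‖ < 1 → ∃ x : ℍ[ℝ], ‖x‖ < 1 ∧ (1 + w * c) * x = w) :
    c = 0 ∧ m = 1 := by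
  have hc : c = 0 := by
    by_contra hc
    have hk : 0 < ‖c‖ := norm_pos_iff.2 hc
    obtain ⟨k, hkk⟩ : ∃ k, k = ‖c‖ := ⟨_, rfl⟩
    rw [← hkk] at hk
    have hn : ∀ r : ℝ, ‖(r / k) • star c‖ = |r| := by
      intro r
      rw [norm_smul, Quaternion.norm_star, ← hkk, Real.norm_eq_abs, abs_div, abs_of_pos hk]
      field_simp
    have e1 : ∀ r : ℝ, c * ((r / k) • star c) = ((r * k : ℝ) : ℍ[ℝ]) := by
      intro r
      rw [mul_smul_comm, Quaternion.self_mul_star, Quaternion.normSq_eq_norm_mul_self, ← hkk,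
        ← Quaternion.coe_smul]
      congr 1
      simp; field_simp
    have e2 : ∀ r : ℝ, ((r / k) • star c) * c = ((r * k : ℝ) : ℍ[ℝ]) := by
      intro r
      rw [smul_mul_assoc, Quaternion.star_mul_self, Quaternion.normSq_eq_norm_mul_self, ← hkk,
        ← Quaternion.coe_smul]
      congr 1
      simp; field_simp
    have i1 : ∀ r : ℝ, 0 ≤ r → r < 1 → m * r < |1 - r * k| := by
      intro r hr hr1
      have := h1 ((r / k) • star c) (by rw [hn, abs_of_nonneg hr]; exact hr1)
      rw [hn, e1, abs_of_nonneg hr] at this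
      rwa [← Real.norm_eq_abs, ← Quaternion.norm_coe, Quaternion.coe_sub, Quaternion.coe_one]
    have i2 : ∀ s : ℝ, 0 < s → m * s < 1 → s < |1 - s * k| := by
      intro s hs hs1
      obtain ⟨x, hx, hxe⟩ := h2 ((-s / k) • star c) (by rw [hn, abs_neg, abs_of_pos hs]; exact hs1)
      rw [e2] at hxe
      have h3 := congrArg norm hxe
      rw [norm_mul, hn, abs_neg, abs_of_pos hs, ← Quaternion.coe_one, ← Quaternion.coe_add,
        Quaternion.norm_coe, Real.norm_eq_abs] at h3
      have e : 1 + -s * k = 1 - s * k := by ring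
      rw [e] at h3
      have : 0 < |1 - s * k| := by
        rcases (abs_nonneg (1 - s * k)).eq_or_lt with h | h
        · rw [← h] at h3; simp at h3; linarith
        · exact h
      nlinarith
    have k1 : k ≤ 1 := by
      by_contra! hk1
      have := i1 (1 / k) (by positivity) (by rw [div_lt_one hk]; exact hk1)
      have e : 1 - 1 / k * k = 0 := by field_simp; simp
      rw [e, abs_zero] at this
      have : 0 < m * (1 / k) := by positivity
      linarith
    have mk : m + k ≤ 1 := by
      by_contra! hmk
      have hp : 0 < m + k := by linarith
      have hr1 : 1 / (m + k) < 1 := by rw [div_lt_one hp]; exact hmk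
      have hr0 : 0 ≤ 1 / (m + k) := by positivity
      have := i1 _ hr0 hr1
      rw [abs_of_nonneg (by nlinarith)] at this
      have e : 1 / (m + k) * (m + k) = 1 := by field_simp
      nlinarith
    have := i2 1 one_pos (by linarith)
    rw [abs_of_nonneg (by linarith)] at this
    linarith
  refine ⟨hc, ?_⟩
  subst hc
  simp only [zero_mul, sub_zero, norm_one, mul_zero, add_zero, one_mul] at h1 h2
  apply le_antisymm
  · by_contra! hlt
    have := h1 ((1 / m : ℝ) : ℍ[ℝ]) (by
      rw [Quaternion.norm_coe, Real.norm_of_nonneg (by positivity), div_lt_one hm]; exact hlt)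
    rw [Quaternion.norm_coe, Real.norm_of_nonneg (by positivity)] at this
    field_simp at this
    simp at this
  · by_contra! hlt
    obtain ⟨x, hx, hxe⟩ := h2 1 (by simpa using hlt)
    rw [hxe, norm_one] at hx
    exact lt_irrefl _ hx

/-- The stabilizer-of-the-origin step in the paper's Theorem 3.37: every
real-analytic pseudoconformal bijection of the open unit ball of `ℍ` fixing `0`
has the form `z ↦ u z v` with unit quaternions `u`, `v`. -/
theorem stmt_15 (g : ℍ[ℝ] → ℍ[ℝ])
    (hbij : Set.BijOn g (Metric.ball (0 : ℍ[ℝ]) 1) (Metric.ball (0 : ℍ[ℝ]) 1))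
    (han : AnalyticOnNhd ℝ g (Metric.ball (0 : ℍ[ℝ]) 1))
    (hpc : ∀ ξ ∈ Metric.ball (0 : ℍ[ℝ]) 1, Pseudoconformal g ξ)
    (h0 : g 0 = 0) :
    ∃ u v : ℍ[ℝ], ‖u‖ = 1 ∧ ‖v‖ = 1 ∧
      ∀ z ∈ Metric.ball (0 : ℍ[ℝ]) 1, g z = u * z * v := by
  obtain ⟨A, a, b, ha, hb, hA, hab⟩ := hpc 0 (by simp)
  have gf : ∀ x ∈ Metric.ball (0 : ℍ[ℝ]) 1, 1 - CC g 0 * x ≠ 0 ∧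
      g x = a * (x * (1 - CC g 0 * x)⁻¹) * b := by
    intro x hx
    have := gform han hpc h0 hx
    rwa [hA.fderiv, hab] at this
  have ha' := norm_pos_iff.2 ha
  have hb' := norm_pos_iff.2 hb
  obtain ⟨hc, hm⟩ := final_alg (CC g 0) (‖a‖ * ‖b‖) (by positivity) (by
      intro x hx
      have hx' : x ∈ Metric.ball (0 : ℍ[ℝ]) 1 := by simpa using hx
      have h1 := hbij.mapsTo hx'
      obtain ⟨hne, he⟩ := gf x hx'
      have hne' := norm_pos_iff.2 hne
      rw [he, mem_ball_zero_iff] at h1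
      simp only [norm_mul, norm_inv] at h1
      rw [show ‖a‖ * (‖x‖ * ‖1 - CC g 0 * x‖⁻¹) * ‖b‖ = (‖a‖ * ‖b‖ * ‖x‖) / ‖1 - CC g 0 * x‖ by
        field_simp, div_lt_one hne'] at h1
      exact h1) (by
      intro w hw
      obtain ⟨x, hx, hxe⟩ := hbij.surjOn (show a * w * b ∈ Metric.ball (0 : ℍ[ℝ]) 1 by
        rw [mem_ball_zero_iff, norm_mul, norm_mul]; linarith)
      refine ⟨x, by simpa using hx, ?_⟩
      obtain ⟨hne, he⟩ := gf x hx
      rw [he] at hxe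
      have h3 := mul_left_cancel₀ ha (mul_right_cancel₀ hb hxe)
      have h4 : x = w * (1 - CC g 0 * x) := by
        rw [← h3, mul_assoc, inv_mul_cancel₀ hne, mul_one]
      rw [add_mul, one_mul]
      nth_rewrite 1 [h4]
      noncomm_ring)
  refine ⟨‖a‖⁻¹ • a, ‖a‖ • b, ?_, ?_, ?_⟩
  · rw [norm_smul, norm_inv, norm_norm, inv_mul_cancel₀ ha'.ne']
  · rw [norm_smul, norm_norm, hm]
  · intro z hz
    rw [(gf z hz).2, hc]
    simp [smul_smul, ha'.ne']
end

section
/- Let B := {z ∈ ℍ : ‖z‖ < 1} be the open unit ball of ℍ. Suppose f : B → B is a bijection of B onto itself, is real-analytic on B (as a map of ℝ⁴), and is pseudoconformal at every point of B. Then there exist a ∈ ℍ with ‖a‖ < 1 and quaternions u, v with ‖u‖ = ‖v‖ = 1 such that f(z) = (1 − (u*z*v) * star a)⁻¹ * (a − u*z*v) for all z ∈ B; that is, f = S_a ∘ (z ↦ u z v) where S_a(w) := (1 − w * star a)⁻¹ * (a − w). (Paper's Theorem 3.37 classifying the group of pseudoconformal diffeomorphisms of the unit ball, for one quaternion variable.)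 -/
open scoped Quaternion

namespace PCBall
open Filter Topology Set

/-- injective `C²` pseudoconformal self-maps of the ball -/
structure PB (f : ℍ[ℝ] → ℍ[ℝ]) : Prop where
  maps : MapsTo f (Metric.ball (0 : ℍ[ℝ]) 1) (Metric.ball (0 : ℍ[ℝ]) 1)
  inj : InjOn f (Metric.ball (0 : ℍ[ℝ]) 1)
  c2 : ∀ x ∈ Metric.ball (0 : ℍ[ℝ]) 1, ContDiffAt ℝ 2 f x
  pc : ∀ x ∈ Metric.ball (0 : ℍ[ℝ]) 1, Pseudoconformal f x

lemma second_deriv_test {φ φ' : ℝ → ℝ} {c : ℝ} (h1 : ∀ᶠ t in 𝓝 (0:ℝ), HasDerivAt φ (φ' t) t)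
    (h2 : HasDerivAt φ' c 0) (hm : IsLocalMax φ 0) : c ≤ 0 := by
  by_contra hc
  push Not at hc
  have e : deriv φ =ᶠ[𝓝 0] φ' := h1.mono fun t ht => ht.deriv
  have hd : deriv φ 0 = 0 := hm.deriv_eq_zero
  have hdd : deriv (deriv φ) 0 = c := by
    rw [e.deriv_eq]; exact h2.deriv
  have hmin : IsLocalMin φ 0 := isLocalMin_of_deriv_deriv_pos (by rw [hdd]; exact hc) hd
    h1.self_of_nhds.continuousAt
  have hconst : φ =ᶠ[𝓝 0] fun _ => φ 0 := by
    filter_upwards [hm, hmin] with t a b using le_antisymm a b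
  have h3 : deriv φ =ᶠ[𝓝 0] fun _ => 0 := by
    have := hconst.deriv
    simpa using this
  have := h3.deriv_eq
  rw [hdd] at this
  simp at this
  exact hc.ne' this

lemma inner_conf (a b h k : ℍ[ℝ]) : inner ℝ (a * h * b) (a * k * b) =
    ‖a‖ ^ 2 * ‖b‖ ^ 2 * inner ℝ h k := by
  simp only [pow_two, ← Quaternion.normSq_eq_norm_mul_self]
  simp only [Quaternion.inner_def, Quaternion.normSq_def', Quaternion.re_mul, Quaternion.imI_mul,
    Quaternion.imJ_mul, Quaternion.imK_mul, Quaternion.re_star, Quaternion.imI_star,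
    Quaternion.imJ_star, Quaternion.imK_star]
  ring

lemma PB.conf {f} (hf : PB f) {x} (hx : x ∈ Metric.ball (0 : ℍ[ℝ]) 1) :
    ∃ L : ℝ, 0 < L ∧ ∀ h k, inner ℝ (fderiv ℝ f x h) (fderiv ℝ f x k) = L * inner ℝ h k := by
  obtain ⟨A, a, b, ha, hb, hA, h⟩ := hf.pc x hx
  refine ⟨‖a‖ ^ 2 * ‖b‖ ^ 2, by positivity, fun u v => ?_⟩
  rw [hA.fderiv, h, h, inner_conf]

lemma PB.deriv1 {f} (hf : PB f) {x} (hx : x ∈ Metric.ball (0 : ℍ[ℝ]) 1) {h k : ℍ[ℝ]}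
    (hk : inner ℝ h k = 0) (l : ℍ[ℝ]) :
    inner ℝ (fderiv ℝ (fderiv ℝ f) x l h) (fderiv ℝ f x k) +
     inner ℝ (fderiv ℝ f x h) (fderiv ℝ (fderiv ℝ f) x l k) = 0 := by
  have hD : HasFDerivAt (fderiv ℝ f) (fderiv ℝ (fderiv ℝ f) x) x :=
    (((hf.c2 x hx).fderiv_right (m := 1) (by norm_num)).differentiableAt (by norm_num)).hasFDerivAt
  have h1 := (hD.clm_apply (hasFDerivAt_const h x)).inner ℝ (hD.clm_apply (hasFDerivAt_const k x))
  have h2 : (fun y => inner ℝ (fderiv ℝ f y h) (fderiv ℝ f y k)) =ᶠ[𝓝 x] fun _ => (0:ℝ) := by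
    filter_upwards [Metric.isOpen_ball.mem_nhds hx] with y hy
    obtain ⟨L, -, hL⟩ := hf.conf hy
    rw [hL, hk, mul_zero]
  have h3 := h1.unique ((hasFDerivAt_const (0:ℝ) x).congr_of_eventuallyEq h2)
  have := DFunLike.congr_fun h3 l
  simp at this
  linarith

lemma PB.deriv2 {f} (hf : PB f) {x} (hx : x ∈ Metric.ball (0 : ℍ[ℝ]) 1) {h k : ℍ[ℝ]}
    (hk : inner ℝ h h = inner ℝ k k) (l : ℍ[ℝ]) :
    inner ℝ (fderiv ℝ (fderiv ℝ f) x l h) (fderiv ℝ f x h) =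
    inner ℝ (fderiv ℝ (fderiv ℝ f) x l k) (fderiv ℝ f x k) := by
  have hD : HasFDerivAt (fderiv ℝ f) (fderiv ℝ (fderiv ℝ f) x) x :=
    (((hf.c2 x hx).fderiv_right (m := 1) (by norm_num)).differentiableAt (by norm_num)).hasFDerivAt
  have h1 := (hD.clm_apply (hasFDerivAt_const h x)).inner ℝ (hD.clm_apply (hasFDerivAt_const h x))
  have h1' := (hD.clm_apply (hasFDerivAt_const k x)).inner ℝ (hD.clm_apply (hasFDerivAt_const k x))
  have h2 : (fun y => inner ℝ (fderiv ℝ f y h) (fderiv ℝ f y h)) =ᶠ[𝓝 x]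
      fun y => inner ℝ (fderiv ℝ f y k) (fderiv ℝ f y k) := by
    filter_upwards [Metric.isOpen_ball.mem_nhds hx] with y hy
    obtain ⟨L, -, hL⟩ := hf.conf hy
    rw [hL, hL, hk]
  have h3 := h1.unique (h1'.congr_of_eventuallyEq h2)
  have := DFunLike.congr_fun h3 l
  simp at this
  rw [real_inner_comm (fderiv ℝ (fderiv ℝ f) x l h) (fderiv ℝ f x h),
    real_inner_comm (fderiv ℝ (fderiv ℝ f) x l k) (fderiv ℝ f x k)] at this
  linarith

lemma PB.second {f} (hf : PB f) {x} (hx : x ∈ Metric.ball (0 : ℍ[ℝ]) 1) {h k : ℍ[ℝ]}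
    (hk : inner ℝ h h = inner ℝ k k) (h0 : inner ℝ h k = 0) :
    inner ℝ (fderiv ℝ (fderiv ℝ f) x h h) (fderiv ℝ f x k) =
    - inner ℝ (fderiv ℝ (fderiv ℝ f) x k k) (fderiv ℝ f x k) := by
  have hs : fderiv ℝ (fderiv ℝ f) x h k = fderiv ℝ (fderiv ℝ f) x k h :=
    (hf.c2 x hx).isSymmSndFDerivAt (by simp) h k
  have a := hf.deriv1 hx h0 h
  have b := hf.deriv2 hx hk k
  rw [hs, real_inner_comm] at a
  rw [real_inner_comm, real_inner_comm (fderiv ℝ (fderiv ℝ f) x k h)] at a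
  linarith

/-- comparison function -/
noncomputable def P (ε : ℝ) (f : ℍ[ℝ] → ℍ[ℝ]) (x : ℍ[ℝ]) : ℝ :=
  Real.log (inner ℝ (f x) (f x)) - ((1 - ε) * Real.log (inner ℝ x x) - ε * inner ℝ x x)

lemma line_deriv (x h : ℍ[ℝ]) (t : ℝ) : HasDerivAt (fun t : ℝ => x + t • h) h t := by
  have := ((hasDerivAt_id t).smul_const h).const_add x
  rw [one_smul] at this
  exact this

lemma dir_aux {F F' γ : ℝ → ℍ[ℝ]} {h w : ℍ[ℝ]} {ε : ℝ}
    (hF : ∀ᶠ t in 𝓝 (0:ℝ), HasDerivAt F (F' t) t) (hF2 : HasDerivAt F' w 0)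
    (hγ : ∀ t, HasDerivAt γ h t) (hx0 : γ 0 ≠ 0) (hfx : F 0 ≠ 0)
    (hm : IsLocalMax (fun t => Real.log (inner ℝ (F t) (F t)) -
      ((1 - ε) * Real.log (inner ℝ (γ t) (γ t)) - ε * inner ℝ (γ t) (γ t))) 0) :
    2 * inner ℝ (F 0) (F' 0) / inner ℝ (F 0) (F 0)
      - ((1 - ε) * (2 * inner ℝ (γ 0) h / inner ℝ (γ 0) (γ 0)) - ε * (2 * inner ℝ (γ 0) h)) = 0 ∧
    ((2 * inner ℝ (F 0) w
        + 2 * inner ℝ (F' 0) (F' 0)) * inner ℝ (F 0) (F 0)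
        - (2 * inner ℝ (F 0) (F' 0)) ^ 2) / (inner ℝ (F 0) (F 0)) ^ 2
      - ((1 - ε) * (((2 * inner ℝ h h) * inner ℝ (γ 0) (γ 0) - (2 * inner ℝ (γ 0) h) ^ 2)
          / (inner ℝ (γ 0) (γ 0)) ^ 2)
        - ε * (2 * inner ℝ h h)) ≤ 0 := by
  let φ' : ℝ → ℝ := fun t => (2 * inner ℝ (F t) (F' t)) / inner ℝ (F t) (F t)
      - ((1 - ε) * (2 * inner ℝ (γ t) h / inner ℝ (γ t) (γ t)) - ε * (2 * inner ℝ (γ t) h))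
  have hne : ∀ᶠ t in 𝓝 (0:ℝ), γ t ≠ 0 := (hγ 0).continuousAt.eventually_ne hx0
  have hfne : ∀ᶠ t in 𝓝 (0:ℝ), F t ≠ 0 := hF.self_of_nhds.continuousAt.eventually_ne hfx
  have hd1 : ∀ᶠ t in 𝓝 (0:ℝ), HasDerivAt (fun t => Real.log (inner ℝ (F t) (F t)) -
      ((1 - ε) * Real.log (inner ℝ (γ t) (γ t)) - ε * inner ℝ (γ t) (γ t))) (φ' t) t := by
    filter_upwards [hF, hne, hfne] with t h1 h2 h3
    have b1 : HasDerivAt (fun t => (inner ℝ (F t) (F t) : ℝ)) (2 * inner ℝ (F t) (F' t)) t := by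
      refine (h1.inner ℝ h1).congr_deriv ?_
      rw [real_inner_comm (F t) (F' t)]
      ring
    have b2 : HasDerivAt (fun t => (inner ℝ (γ t) (γ t) : ℝ)) (2 * inner ℝ (γ t) h) t := by
      refine ((hγ t).inner ℝ (hγ t)).congr_deriv ?_
      rw [real_inner_comm (γ t) h]
      ring
    exact (b1.log (inner_self_ne_zero.2 h3)).sub
      (((b2.log (inner_self_ne_zero.2 h2)).const_mul (1 - ε)).sub (b2.const_mul ε))
  have hz : (inner ℝ (γ 0) (γ 0) : ℝ) ≠ 0 := inner_self_ne_zero.2 hx0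
  have hfz : (inner ℝ (F 0) (F 0) : ℝ) ≠ 0 := inner_self_ne_zero.2 hfx
  refine ⟨hm.hasDerivAt_eq_zero hd1.self_of_nhds, ?_⟩
  have h1 := hF.self_of_nhds
  have n2 := (h1.inner ℝ hF2).const_mul 2
  have n1 := h1.inner ℝ h1
  have s2 := ((hγ 0).inner ℝ (hasDerivAt_const (0:ℝ) h)).const_mul 2
  have s1 := (hγ 0).inner ℝ (hγ 0)
  have a2 := (n2.div n1 hfz).sub
    (((s2.div s1 hz).const_mul (1 - ε)).sub (s2.const_mul ε))
  have := second_deriv_test hd1 a2 hm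
  simp only [inner_zero_right, zero_add] at this
  refine le_of_eq_of_le ?_ this
  rw [real_inner_comm (F 0) (F' 0), real_inner_comm (γ 0) h]
  ring

lemma PB.dir {f} (hf : PB f) {x} (hx : x ∈ Metric.ball (0 : ℍ[ℝ]) 1) (hx0 : x ≠ 0)
    (hfx : f x ≠ 0) {ε : ℝ} (hm : IsLocalMax (P ε f) x) (h : ℍ[ℝ]) :
    2 * inner ℝ (f x) (fderiv ℝ f x h) / inner ℝ (f x) (f x)
      - ((1 - ε) * (2 * inner ℝ x h / inner ℝ x x) - ε * (2 * inner ℝ x h)) = 0 ∧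
    ((2 * inner ℝ (f x) (fderiv ℝ (fderiv ℝ f) x h h)
        + 2 * inner ℝ (fderiv ℝ f x h) (fderiv ℝ f x h)) * inner ℝ (f x) (f x)
        - (2 * inner ℝ (f x) (fderiv ℝ f x h)) ^ 2) / (inner ℝ (f x) (f x)) ^ 2
      - ((1 - ε) * (((2 * inner ℝ h h) * inner ℝ x x - (2 * inner ℝ x h) ^ 2) / (inner ℝ x x) ^ 2)
        - ε * (2 * inner ℝ h h)) ≤ 0 := by
  obtain ⟨γ, hγd⟩ : ∃ γ : ℝ → ℍ[ℝ], γ = fun t : ℝ => x + t • h := ⟨_, rfl⟩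
  have hγ : ∀ t, HasDerivAt γ h t := fun t => hγd ▸ line_deriv x h t
  have hγ0 : γ 0 = x := by simp [hγd]
  have hγt : Tendsto γ (𝓝 0) (𝓝 x) := by
    have := (hγ 0).continuousAt.tendsto
    rwa [hγ0] at this
  have hD : HasFDerivAt (fderiv ℝ f) (fderiv ℝ (fderiv ℝ f) x) (γ 0) := by
    rw [hγ0]
    exact (((hf.c2 x hx).fderiv_right (m := 1) (by norm_num)).differentiableAt
      (by norm_num)).hasFDerivAt
  have hB : ∀ᶠ t in 𝓝 (0:ℝ), γ t ∈ Metric.ball (0 : ℍ[ℝ]) 1 :=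
    hγt (Metric.isOpen_ball.mem_nhds hx)
  have hmax : IsLocalMax (fun t => P ε f (γ t)) 0 := by
    have : ∀ᶠ t in 𝓝 (0:ℝ), P ε f (γ t) ≤ P ε f x := hγt.eventually hm
    filter_upwards [this] with t ht
    rwa [hγ0]
  have hF : ∀ᶠ t in 𝓝 (0:ℝ), HasDerivAt (fun t => f (γ t)) (fderiv ℝ f (γ t) h) t := by
    filter_upwards [hB] with t ht
    exact ((hf.c2 _ ht).differentiableAt (by norm_num)).hasFDerivAt.comp_hasDerivAt t (hγ t)
  have hF2 : HasDerivAt (fun t => fderiv ℝ f (γ t) h) (fderiv ℝ (fderiv ℝ f) x h h) 0 := by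
    have h1 := hD.clm_apply (hasFDerivAt_const h (γ 0))
    have := h1.comp_hasDerivAt (0:ℝ) (hγ 0)
    refine this.congr_deriv ?_
    simp
  have := dir_aux (ε := ε) hF hF2 hγ (by rwa [hγ0]) (by rwa [hγ0]) hmax
  simp only [hγ0] at this
  exact this

lemma key_alg {ε N s L μ c0 c1 c2 c3 : ℝ} (hε : 0 < ε) (hs : s ≠ 0) (hL : L ≠ 0) (hμ : μ ≠ 0)
    (hN : N = μ ^ 2 * L) (hc : 3 * c0 + c1 + c2 + c3 = 0)
    (h0 : ((2 * (μ * c0) + 2 * L) * N - (2 * (μ * L)) ^ 2) / N ^ 2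
      - ((1 - ε) * (((2 * s) * s - (2 * s) ^ 2) / s ^ 2) - ε * (2 * s)) ≤ 0)
    (h1 : ((2 * (μ * c1) + 2 * L) * N - (2 * 0) ^ 2) / N ^ 2
      - ((1 - ε) * (((2 * s) * s - (2 * 0) ^ 2) / s ^ 2) - ε * (2 * s)) ≤ 0)
    (h2 : ((2 * (μ * c2) + 2 * L) * N - (2 * 0) ^ 2) / N ^ 2
      - ((1 - ε) * (((2 * s) * s - (2 * 0) ^ 2) / s ^ 2) - ε * (2 * s)) ≤ 0)
    (h3 : ((2 * (μ * c3) + 2 * L) * N - (2 * 0) ^ 2) / N ^ 2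
      - ((1 - ε) * (((2 * s) * s - (2 * 0) ^ 2) / s ^ 2) - ε * (2 * s)) ≤ 0) : s ≤ 0 := by
  have hsum : 3 * (((2 * (μ * c0) + 2 * L) * N - (2 * (μ * L)) ^ 2) / N ^ 2
      - ((1 - ε) * (((2 * s) * s - (2 * s) ^ 2) / s ^ 2) - ε * (2 * s)))
     + (((2 * (μ * c1) + 2 * L) * N - (2 * 0) ^ 2) / N ^ 2
      - ((1 - ε) * (((2 * s) * s - (2 * 0) ^ 2) / s ^ 2) - ε * (2 * s)))
     + (((2 * (μ * c2) + 2 * L) * N - (2 * 0) ^ 2) / N ^ 2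
      - ((1 - ε) * (((2 * s) * s - (2 * 0) ^ 2) / s ^ 2) - ε * (2 * s)))
     + (((2 * (μ * c3) + 2 * L) * N - (2 * 0) ^ 2) / N ^ 2
      - ((1 - ε) * (((2 * s) * s - (2 * 0) ^ 2) / s ^ 2) - ε * (2 * s))) = 12 * ε * s := by
    obtain rfl : c3 = -(3 * c0 + c1 + c2) := by linarith
    subst hN
    field_simp
    ring
  have : ε * s ≤ 0 := by linarith
  by_contra hh
  push Not at hh
  nlinarith [mul_pos hε hh]

lemma orth_mul (x q : ℍ[ℝ]) (hq : q.re = 0) : inner ℝ (x * q) x = 0 := by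
  simp only [Quaternion.inner_def, Quaternion.re_mul, Quaternion.imI_mul,
    Quaternion.imJ_mul, Quaternion.imK_mul, Quaternion.re_star, Quaternion.imI_star,
    Quaternion.imJ_star, Quaternion.imK_star, hq]
  ring

lemma inner_mul_self (x q : ℍ[ℝ]) (hq : Quaternion.normSq q = 1) :
    inner ℝ (x * q) (x * q) = inner ℝ x x := by
  have h1 : ‖q‖ = 1 := by
    have := Quaternion.normSq_eq_norm_mul_self q
    rw [hq] at this
    nlinarith [norm_nonneg q]
  rw [real_inner_self_eq_norm_sq, real_inner_self_eq_norm_sq, norm_mul, h1, mul_one]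

/-- the three imaginary units -/
def qI : ℍ[ℝ] := ⟨0, 1, 0, 0⟩
/-- the three imaginary units -/
def qJ : ℍ[ℝ] := ⟨0, 0, 1, 0⟩
/-- the three imaginary units -/
def qK : ℍ[ℝ] := ⟨0, 0, 0, 1⟩

lemma qI_re : qI.re = 0 := rfl
lemma qI_imI : qI.imI = 1 := rfl
lemma qI_imJ : qI.imJ = 0 := rfl
lemma qI_imK : qI.imK = 0 := rfl
lemma qJ_re : qJ.re = 0 := rfl
lemma qJ_imI : qJ.imI = 0 := rfl
lemma qJ_imJ : qJ.imJ = 1 := rfl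
lemma qJ_imK : qJ.imK = 0 := rfl
lemma qK_re : qK.re = 0 := rfl
lemma qK_imI : qK.imI = 0 := rfl
lemma qK_imJ : qK.imJ = 0 := rfl
lemma qK_imK : qK.imK = 1 := rfl
lemma qI_n : Quaternion.normSq qI = 1 := by
  rw [Quaternion.normSq_def', qI_re, qI_imI, qI_imJ, qI_imK]; norm_num
lemma qJ_n : Quaternion.normSq qJ = 1 := by
  rw [Quaternion.normSq_def', qJ_re, qJ_imI, qJ_imJ, qJ_imK]; norm_num
lemma qK_n : Quaternion.normSq qK = 1 := by
  rw [Quaternion.normSq_def', qK_re, qK_imI, qK_imJ, qK_imK]; norm_num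

lemma colinear {a b x y : ℍ[ℝ]} (ha : a ≠ 0) (hb : b ≠ 0) (hx : x ≠ 0)
    (h1 : inner ℝ y (a * (x * qI) * b) = 0)
    (h2 : inner ℝ y (a * (x * qJ) * b) = 0)
    (h3 : inner ℝ y (a * (x * qK) * b) = 0) :
    ∃ μ : ℝ, y = μ • (a * x * b) := by
  obtain ⟨w, hw⟩ : ∃ w, w = (a * x)⁻¹ * y * b⁻¹ := ⟨_, rfl⟩
  have hax : a * x ≠ 0 := mul_ne_zero ha hx
  have hy : y = (a * x) * w * b := by
    rw [hw]
    simp only [mul_assoc]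
    rw [inv_mul_cancel₀ hb, mul_one, ← mul_assoc x, ← mul_assoc a (x * _), ← mul_assoc a x,
      mul_inv_cancel₀ hax, one_mul]
  have hn : ‖a * x‖ ^ 2 * ‖b‖ ^ 2 ≠ 0 := by positivity
  rw [← mul_assoc, hy, inner_conf] at h1 h2 h3
  have h1 := (mul_eq_zero.1 h1).resolve_left hn
  have h2 := (mul_eq_zero.1 h2).resolve_left hn
  have h3 := (mul_eq_zero.1 h3).resolve_left hn
  simp only [Quaternion.inner_def, Quaternion.re_mul, Quaternion.re_star, Quaternion.imI_star,
    Quaternion.imJ_star, Quaternion.imK_star, qI_re, qI_imI, qI_imJ, qI_imK,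
    qJ_re, qJ_imI, qJ_imJ, qJ_imK, qK_re, qK_imI, qK_imJ, qK_imK] at h1 h2 h3
  refine ⟨w.re, ?_⟩
  have : w = (w.re : ℍ[ℝ]) := by
    ext <;> simp
    · linarith
    · linarith
    · linarith
  rw [hy, this]
  simp only [Quaternion.re_coe]
  rw [← Quaternion.coe_commutes, mul_assoc, Quaternion.coe_mul_eq_smul]

lemma PB.key {f} (hf : PB f) {x} (hx : x ∈ Metric.ball (0 : ℍ[ℝ]) 1) (hx0 : x ≠ 0)
    (hfx : f x ≠ 0) {ε : ℝ} (hε : 0 < ε) (hm : IsLocalMax (P ε f) x) : False := by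
  have hz : 0 < inner ℝ x x := real_inner_self_pos.2 hx0
  have hfz : (inner ℝ (f x) (f x) : ℝ) ≠ 0 := inner_self_ne_zero.2 hfx
  obtain ⟨L, hL, hLc⟩ := hf.conf hx
  have d0 := (hf.dir hx hx0 hfx hm x).2
  have zz : ∀ q : ℍ[ℝ], q.re = 0 → inner ℝ (f x) (fderiv ℝ f x (x * q)) = 0 := by
    intro q hq
    have d1 := (hf.dir hx hx0 hfx hm (x * q)).1
    rw [real_inner_comm (x * q) x, orth_mul x q hq] at d1
    simpa [hfx] using d1
  obtain ⟨μ, hμ⟩ : ∃ μ : ℝ, f x = μ • fderiv ℝ f x x := by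
    obtain ⟨A, a, b, ha, hb, hA, h⟩ := hf.pc x hx
    rw [hA.fderiv] at zz ⊢
    simp only [h] at zz ⊢
    exact colinear ha hb hx0 (zz _ qI_re) (zz _ qJ_re) (zz _ qK_re)
  have hμ0 : μ ≠ 0 := by
    rintro rfl
    rw [zero_smul] at hμ
    exact hfx hμ
  have hin : ∀ w, inner ℝ (f x) w = μ * inner ℝ w (fderiv ℝ f x x) := by
    intro w
    rw [hμ, real_inner_smul_left, real_inner_comm]
  have hff : inner ℝ (f x) (f x) = μ ^ 2 * (L * inner ℝ x x) := by
    rw [hin, hμ, real_inner_smul_left, hLc]; ring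
  have dd : ∀ q : ℍ[ℝ], q.re = 0 → Quaternion.normSq q = 1 →
      ((2 * (μ * (-inner ℝ (fderiv ℝ (fderiv ℝ f) x x x) (fderiv ℝ f x x)))
        + 2 * (L * inner ℝ x x)) * inner ℝ (f x) (f x)
        - (2 * 0) ^ 2) / (inner ℝ (f x) (f x)) ^ 2
      - ((1 - ε) * (((2 * inner ℝ x x) * inner ℝ x x - (2 * 0) ^ 2) / (inner ℝ x x) ^ 2)
        - ε * (2 * inner ℝ x x)) ≤ 0 := by
    intro q h1 h2
    have d := (hf.dir hx hx0 hfx hm (x * q)).2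
    have o := orth_mul x q h1
    have o' := o
    rw [real_inner_comm] at o'
    rwa [zz q h1, o', hin (fderiv ℝ (fderiv ℝ f) x (x * q) (x * q)),
      hf.second hx (inner_mul_self x q h2) o, hLc, inner_mul_self x q h2] at d
  rw [hin (fderiv ℝ (fderiv ℝ f) x x x), hin (fderiv ℝ f x x), hLc] at d0
  have := key_alg hε hz.ne' (mul_pos hL hz).ne' hμ0 hff (by ring) d0
    (dd qI qI_re qI_n)
    (dd qJ qJ_re qJ_n)
    (dd qK qK_re qK_n)
  linarith
end PCBall

namespace PCBall
open Filter Topology Set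

lemma P_eq (ε : ℝ) (f : ℍ[ℝ] → ℍ[ℝ]) (x : ℍ[ℝ]) : P ε f x =
    2 * Real.log ‖f x‖ - ((1 - ε) * (2 * Real.log ‖x‖) - ε * ‖x‖ ^ 2) := by
  simp only [P, real_inner_self_eq_norm_sq, Real.log_pow]
  norm_num

lemma PB.ne_zero {f} (hf : PB f) (h0 : f 0 = 0) {x} (hx : x ∈ Metric.ball (0 : ℍ[ℝ]) 1)
    (hx0 : x ≠ 0) : f x ≠ 0 := fun h =>
  hx0 (hf.inj hx (Metric.mem_ball_self one_pos) (h.trans h0.symm))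

lemma PB.near_zero {f} (hf : PB f) (h0 : f 0 = 0) {ε : ℝ} (hε : 0 < ε) (c : ℝ) :
    ∃ r > 0, ∀ y ∈ Metric.ball (0 : ℍ[ℝ]) 1, y ≠ 0 → ‖y‖ < r → P ε f y < c := by
  have hb : (0 : ℍ[ℝ]) ∈ Metric.ball (0 : ℍ[ℝ]) 1 := Metric.mem_ball_self one_pos
  have hO := ((hf.c2 0 hb).differentiableAt (by norm_num)).isBigO_sub
  obtain ⟨C, hC, hO⟩ := hO.exists_pos
  have hO := hO.bound
  simp only [h0, sub_zero] at hO
  have hlog : Tendsto (fun t : ℝ => 2 * ε * Real.log t) (𝓝[>] 0) atBot :=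
    Real.tendsto_log_nhdsGT_zero.const_mul_atBot (by positivity)
  have hl := hlog.eventually_lt_atBot (c - 2 * Real.log C - ε)
  obtain ⟨r1, hr1, h1⟩ := Metric.eventually_nhds_iff.1 hO
  obtain ⟨r2, hr2, h2⟩ := mem_nhdsGT_iff_exists_Ioo_subset.1 hl
  refine ⟨min r1 r2, lt_min hr1 hr2, fun y hy hy0 hyr => ?_⟩
  have hyp : 0 < ‖y‖ := norm_pos_iff.2 hy0
  have hfp : 0 < ‖f y‖ := norm_pos_iff.2 (hf.ne_zero h0 hy hy0)
  have a1 := h1 (show dist y 0 < r1 by simpa using hyr.trans_le (min_le_left _ _))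
  have a2 : 2 * ε * Real.log ‖y‖ < c - 2 * Real.log C - ε :=
    h2 ⟨hyp, hyr.trans_le (min_le_right _ _)⟩
  have a3 := Real.log_le_log hfp a1
  rw [Real.log_mul hC.ne' hyp.ne'] at a3
  have a4 : ‖y‖ ^ 2 ≤ 1 := by
    have : ‖y‖ < 1 := by simpa using hy
    nlinarith
  rw [P_eq]
  nlinarith

lemma PB.near_one {f} (hf : PB f) {ε : ℝ} {c : ℝ} (hc : ε < c) :
    ∃ R < 1, ∀ y ∈ Metric.ball (0 : ℍ[ℝ]) 1, R < ‖y‖ → P ε f y < c := by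
  have hcont : ContinuousAt (fun t : ℝ => - ((1 - ε) * (2 * Real.log t) - ε * t ^ 2)) 1 := by
    have := Real.continuousAt_log (one_ne_zero)
    fun_prop
  have he : ∀ᶠ t in 𝓝 (1:ℝ), - ((1 - ε) * (2 * Real.log t) - ε * t ^ 2) < c :=
    hcont.eventually_lt_const (by simpa using hc)
  obtain ⟨δ, hδ, h⟩ := Metric.eventually_nhds_iff.1 he
  refine ⟨1 - δ, by linarith, fun y hy hyR => ?_⟩
  have hy1 : ‖y‖ < 1 := by simpa using hy
  have h1 := h (show dist ‖y‖ 1 < δ by rw [Real.dist_eq, abs_lt]; constructor <;> linarith)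
  have h2 : ‖f y‖ < 1 := by simpa using hf.maps hy
  have h3 := Real.log_nonpos (norm_nonneg _) h2.le
  rw [P_eq]
  linarith

lemma PB.contP {f} (hf : PB f) (h0 : f 0 = 0) {ε : ℝ} {x} (hx : x ∈ Metric.ball (0 : ℍ[ℝ]) 1)
    (hx0 : x ≠ 0) : ContinuousAt (P ε f) x := by
  have h1 := hf.ne_zero h0 hx hx0
  have h2 := (hf.c2 x hx).continuousAt
  have h3 : ContinuousAt (fun x => Real.log ‖f x‖) x := h2.norm.log (norm_ne_zero_iff.2 h1)
  have h4 : ContinuousAt (fun x : ℍ[ℝ] => Real.log ‖x‖) x :=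
    continuousAt_id.norm.log (norm_ne_zero_iff.2 hx0)
  rw [funext (P_eq ε f)]
  fun_prop

lemma PB.P_le {f} (hf : PB f) (h0 : f 0 = 0) {ε : ℝ} (hε : 0 < ε) {x}
    (hx : x ∈ Metric.ball (0 : ℍ[ℝ]) 1) (hx0 : x ≠ 0) : P ε f x ≤ ε := by
  by_contra hc
  push Not at hc
  obtain ⟨r, hr, h1⟩ := hf.near_zero h0 hε (P ε f x)
  obtain ⟨R, hR, h2⟩ := hf.near_one hc
  have hK : IsCompact (Metric.closedBall (0 : ℍ[ℝ]) R \ Metric.ball 0 r) :=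
    (isCompact_closedBall _ _).diff Metric.isOpen_ball
  have memK : ∀ y : ℍ[ℝ], y ∈ Metric.closedBall (0 : ℍ[ℝ]) R \ Metric.ball 0 r ↔
      ‖y‖ ≤ R ∧ r ≤ ‖y‖ := by
    intro y; simp
  have hxK : x ∈ Metric.closedBall (0 : ℍ[ℝ]) R \ Metric.ball 0 r := by
    rw [memK]
    constructor
    · by_contra! h; exact (h2 x hx h).false
    · by_contra! h; exact (h1 x hx hx0 h).false
  have hK1 : ∀ y ∈ Metric.closedBall (0 : ℍ[ℝ]) R \ Metric.ball 0 r,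
      y ∈ Metric.ball (0 : ℍ[ℝ]) 1 ∧ y ≠ 0 := by
    intro y hy
    rw [memK] at hy
    exact ⟨by simpa using hy.1.trans_lt hR, norm_pos_iff.1 (hr.trans_le hy.2)⟩
  obtain ⟨z, hz, hmax⟩ := hK.exists_isMaxOn ⟨x, hxK⟩
    (fun y hy => (hf.contP h0 (ε := ε) (hK1 y hy).1 (hK1 y hy).2).continuousWithinAt)
  obtain ⟨hzB, hz0⟩ := hK1 z hz
  refine hf.key hzB hz0 (hf.ne_zero h0 hzB hz0) hε ?_
  filter_upwards [Metric.isOpen_ball.mem_nhds hzB, isOpen_ne.mem_nhds hz0] with y hy hy0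
  by_cases hyK : y ∈ Metric.closedBall (0 : ℍ[ℝ]) R \ Metric.ball 0 r
  · exact hmax hyK
  · refine le_trans ?_ (hmax hxK)
    rw [memK, not_and_or] at hyK
    rcases hyK with h | h
    · exact (h2 y hy (not_le.1 h)).le
    · exact (h1 y hy hy0 (not_le.1 h)).le

lemma PB.schwarz {f} (hf : PB f) (h0 : f 0 = 0) {x}
    (hx : x ∈ Metric.ball (0 : ℍ[ℝ]) 1) : ‖f x‖ ≤ ‖x‖ := by
  by_cases hx0 : x = 0
  · simp [hx0, h0]
  have hp := norm_pos_iff.2 hx0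
  have hfp := norm_pos_iff.2 (hf.ne_zero h0 hx hx0)
  have h1 : Tendsto (fun ε : ℝ => 2 * Real.log ‖f x‖ -
      ((1 - ε) * (2 * Real.log ‖x‖) - ε * ‖x‖ ^ 2) - ε) (𝓝[>] 0)
      (𝓝 (2 * Real.log ‖f x‖ - ((1 - 0) * (2 * Real.log ‖x‖) - 0 * ‖x‖ ^ 2) - 0)) := by
    refine (Continuous.tendsto ?_ 0).mono_left nhdsWithin_le_nhds
    fun_prop
  have h2 := le_of_tendsto (b := (0:ℝ)) h1 (by
    filter_upwards [self_mem_nhdsWithin] with ε hε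
    have := hf.P_le h0 hε hx hx0
    rw [P_eq] at this
    linarith)
  refine (Real.log_le_log_iff hfp hp).1 (by linarith)

/-- bijective version -/
structure PBB (f : ℍ[ℝ] → ℍ[ℝ]) : Prop where
  bij : BijOn f (Metric.ball (0 : ℍ[ℝ]) 1) (Metric.ball (0 : ℍ[ℝ]) 1)
  c2 : ∀ x ∈ Metric.ball (0 : ℍ[ℝ]) 1, ContDiffAt ℝ 2 f x
  pc : ∀ x ∈ Metric.ball (0 : ℍ[ℝ]) 1, Pseudoconformal f x

lemma PBB.pb {f} (hf : PBB f) : PB f := ⟨hf.bij.mapsTo, hf.bij.injOn, hf.c2, hf.pc⟩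

lemma pc_comp {f g : ℍ[ℝ] → ℍ[ℝ]} {x : ℍ[ℝ]} (hg : Pseudoconformal g (f x))
    (hf : Pseudoconformal f x) : Pseudoconformal (g ∘ f) x := by
  obtain ⟨A, a, b, ha, hb, hA, h⟩ := hf
  obtain ⟨A', a', b', ha', hb', hA', h'⟩ := hg
  refine ⟨A'.comp A, a' * a, b * b', mul_ne_zero ha' ha, mul_ne_zero hb hb', hA'.comp x hA, ?_⟩
  intro v
  simp only [ContinuousLinearMap.comp_apply, h, h', mul_assoc]

lemma PBB.comp {f g} (hg : PBB g) (hf : PBB f) : PBB (g ∘ f) :=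
  ⟨hg.bij.comp hf.bij, fun x hx => (hg.c2 _ (hf.bij.mapsTo hx)).comp x (hf.c2 x hx),
    fun x hx => pc_comp (hg.pc _ (hf.bij.mapsTo hx)) (hf.pc x hx)⟩

lemma PBB.inv {f} (hf : PBB f) : ∃ g, PBB g ∧ ∀ x ∈ Metric.ball (0 : ℍ[ℝ]) 1, g (f x) = x := by
  classical
  let g := Function.invFunOn f (Metric.ball (0 : ℍ[ℝ]) 1)
  have hgf : InvOn g f (Metric.ball (0 : ℍ[ℝ]) 1) (Metric.ball (0 : ℍ[ℝ]) 1) := hf.bij.invOn_invFunOn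
  have hmaps : MapsTo g (Metric.ball (0 : ℍ[ℝ]) 1) (Metric.ball (0 : ℍ[ℝ]) 1) :=
    hf.bij.surjOn.mapsTo_invFunOn
  have main : ∀ x ∈ Metric.ball (0 : ℍ[ℝ]) 1, ContDiffAt ℝ 2 g (f x) ∧ Pseudoconformal g (f x) := by
    intro x hx
    obtain ⟨A, a, b, ha, hb, hA, h⟩ := hf.pc x hx
    have hinj : Function.Injective A := by
      refine (injective_iff_map_eq_zero A).2 fun v hv => ?_
      rw [h] at hv
      simpa [ha, hb] using hv
    let e' : ℍ[ℝ] ≃ₗ[ℝ] ℍ[ℝ] := LinearEquiv.ofInjectiveEndo (A : ℍ[ℝ] →ₗ[ℝ] ℍ[ℝ]) hinj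
    let e : ℍ[ℝ] ≃L[ℝ] ℍ[ℝ] := e'.toContinuousLinearEquiv
    have he : ∀ v, e v = A v := fun v => rfl
    have heA : (e : ℍ[ℝ] →L[ℝ] ℍ[ℝ]) = A := by ext1 v; exact he v
    have hA' : HasFDerivAt f (e : ℍ[ℝ] →L[ℝ] ℍ[ℝ]) x := by rwa [heA]
    have hs : HasStrictFDerivAt f (e : ℍ[ℝ] →L[ℝ] ℍ[ℝ]) x :=
      (hf.c2 x hx).hasStrictFDerivAt' hA' (by norm_num)
    have hev : ∀ᶠ y in 𝓝 x, g (f y) = y := by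
      filter_upwards [Metric.isOpen_ball.mem_nhds hx] with y hy using hgf.1 hy
    have huniq := hs.localInverse_unique hev
    have hc := (hf.c2 x hx).to_localInverse hA' (by norm_num)
    refine ⟨hc.congr_of_eventuallyEq huniq, e.symm, a⁻¹, b⁻¹, inv_ne_zero ha, inv_ne_zero hb,
      (hs.to_local_left_inverse hev).hasFDerivAt, ?_⟩
    intro v
    have : e (a⁻¹ * v * b⁻¹) = v := by
      rw [he, h]
      simp only [mul_assoc]
      rw [inv_mul_cancel₀ hb, mul_one, mul_inv_cancel_left₀ ha]
    conv_lhs => rw [← this]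
    exact e.symm_apply_apply _
  refine ⟨g, ⟨hgf.symm.bijOn hmaps hf.bij.mapsTo, ?_, ?_⟩, hgf.1⟩
  · intro y hy
    have := (main _ (hmaps hy)).1
    rwa [hgf.2 hy] at this
  · intro y hy
    have := (main _ (hmaps hy)).2
    rwa [hgf.2 hy] at this

lemma PBB.norm_eq {f} (hf : PBB f) (h0 : f 0 = 0) {x}
    (hx : x ∈ Metric.ball (0 : ℍ[ℝ]) 1) : ‖f x‖ = ‖x‖ := by
  obtain ⟨g, hg, hgf⟩ := hf.inv
  refine le_antisymm (hf.pb.schwarz h0 hx) ?_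
  have g0 : g 0 = 0 := by
    have := hgf 0 (Metric.mem_ball_self one_pos)
    rwa [h0] at this
  have := hg.pb.schwarz g0 (hf.bij.mapsTo hx)
  rwa [hgf x hx] at this
end PCBall

namespace PCBall
open Filter Topology Set

/-- the Möbius map -/
noncomputable def S (a w : ℍ[ℝ]) : ℍ[ℝ] := (1 - w * star a)⁻¹ * (a - w)

lemma nb {a w : ℍ[ℝ]} (ha : ‖a‖ < 1) (hw : ‖w‖ < 1) : 1 - w * star a ≠ 0 := by
  intro h
  have h1 : w * star a = 1 := (sub_eq_zero.1 h).symm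
  have h2 : ‖w‖ * ‖a‖ = 1 := by rw [← norm_star a, ← norm_mul, h1, norm_one]
  nlinarith [norm_nonneg a, norm_nonneg w]

lemma norm_den (a w : ℍ[ℝ]) : ‖1 - w * star a‖ ^ 2 =
    1 - 2 * inner ℝ w a + ‖w‖ ^ 2 * ‖a‖ ^ 2 := by
  simp only [pow_two, ← Quaternion.normSq_eq_norm_mul_self]
  simp only [Quaternion.inner_def, Quaternion.normSq_def', Quaternion.re_mul, Quaternion.imI_mul,
    Quaternion.imJ_mul, Quaternion.imK_mul, Quaternion.re_star, Quaternion.imI_star,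
    Quaternion.imJ_star, Quaternion.imK_star, Quaternion.re_sub, Quaternion.imI_sub,
    Quaternion.imJ_sub, Quaternion.imK_sub, Quaternion.re_one, Quaternion.imI_one,
    Quaternion.imJ_one, Quaternion.imK_one]
  ring

lemma norm_S {a w : ℍ[ℝ]} (ha : ‖a‖ < 1) (hw : ‖w‖ < 1) :
    (1 - ‖S a w‖ ^ 2) * ‖1 - w * star a‖ ^ 2 = (1 - ‖a‖ ^ 2) * (1 - ‖w‖ ^ 2) := by
  have h0 : ‖1 - w * star a‖ ≠ 0 := norm_ne_zero_iff.2 (nb ha hw)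
  have h1 : ‖S a w‖ * ‖1 - w * star a‖ = ‖a - w‖ := by
    rw [S, norm_mul, norm_inv]; field_simp
  have h2 : ‖a - w‖ ^ 2 = ‖a‖ ^ 2 - 2 * inner ℝ w a + ‖w‖ ^ 2 := by
    rw [norm_sub_sq_real, real_inner_comm]
  have h3 : (‖S a w‖ * ‖1 - w * star a‖) ^ 2 = ‖a‖ ^ 2 - 2 * inner ℝ w a + ‖w‖ ^ 2 := by
    rw [h1, h2]
  have h4 := norm_den a w
  nlinarith

lemma S_maps {a w : ℍ[ℝ]} (ha : ‖a‖ < 1) (hw : ‖w‖ < 1) : ‖S a w‖ < 1 := by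
  have h0 : 0 < ‖1 - w * star a‖ := norm_pos_iff.2 (nb ha hw)
  have h1 := norm_S ha hw
  have h2 : 0 < (1 - ‖a‖ ^ 2) * (1 - ‖w‖ ^ 2) :=
    mul_pos (by nlinarith [norm_nonneg a]) (by nlinarith [norm_nonneg w])
  rw [← h1] at h2
  have h3 := (pos_iff_pos_of_mul_pos h2).2 (by positivity)
  nlinarith [norm_nonneg (S a w)]

lemma S_invol {a w : ℍ[ℝ]} (ha : ‖a‖ < 1) (hw : ‖w‖ < 1) : S a (S a w) = w := by
  have hd := nb ha hw
  have hd2 := nb ha (S_maps ha hw)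
  have e1 : (1 - w * star a) * S a w = a - w := by
    rw [S, ← mul_assoc, mul_inv_cancel₀ hd, one_mul]
  have hc : star a * a = a * star a := by
    rw [Quaternion.star_mul_self, Quaternion.self_mul_star]
  rw [S, inv_mul_eq_iff_eq_mul₀ hd2]
  refine mul_left_cancel₀ hd ?_
  rw [mul_sub, e1, ← mul_assoc, mul_sub, mul_one, ← mul_assoc, e1]
  have : w * star a * a = a * star a * w := by
    rw [mul_assoc, hc, Quaternion.self_mul_star, Quaternion.coe_commutes]
  simp only [sub_mul, mul_sub, one_mul, mul_one, this]
  abel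

lemma S_self (a : ℍ[ℝ]) : S a a = 0 := by simp [S]
lemma S_zero (a : ℍ[ℝ]) : S a 0 = a := by simp [S]

lemma S_pc {a w : ℍ[ℝ]} (ha : ‖a‖ < 1) (hw : ‖w‖ < 1) : Pseudoconformal (S a) w := by
  have hd := nb ha hw
  have h1 : HasFDerivAt (fun w : ℍ[ℝ] => 1 - w * star a)
      (-(ContinuousLinearMap.mul ℝ ℍ[ℝ]).flip (star a)) w := by
    have := (((ContinuousLinearMap.mul ℝ ℍ[ℝ]).flip (star a)).hasFDerivAt (x := w)).const_sub 1
    exact this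
  have h2 := (hasFDerivAt_inv' (𝕜 := ℝ) hd).comp w h1
  have h3 := h2.mul' ((hasFDerivAt_id (𝕜 := ℝ) w).const_sub a)
  refine ⟨_, (1 - w * star a)⁻¹, star a * S a w - 1, inv_ne_zero hd, ?_, h3, ?_⟩
  · intro h
    have h4 : star a * S a w = 1 := sub_eq_zero.1 h
    have h5 : ‖a‖ * ‖S a w‖ = 1 := by rw [← norm_star a, ← norm_mul, h4, norm_one]
    nlinarith [norm_nonneg a, norm_nonneg (S a w), S_maps ha hw]
  · intro v
    simp [S, mul_sub, sub_mul, mul_assoc]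
    try noncomm_ring

lemma S_cd {a w : ℍ[ℝ]} (ha : ‖a‖ < 1) (hw : ‖w‖ < 1) : ContDiffAt ℝ 2 (S a) w := by
  have hd := nb ha hw
  have h1 : ContDiffAt ℝ 2 (fun w : ℍ[ℝ] => 1 - w * star a) w := by fun_prop
  have h2 : ContDiffAt ℝ 2 (fun w : ℍ[ℝ] => (1 - w * star a)⁻¹) w := by
    have h3 : ContDiffAt ℝ 2 (Ring.inverse : ℍ[ℝ] → ℍ[ℝ]) (1 - w * star a) :=
      contDiffAt_ringInverse ℝ (Units.mk0 _ hd)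
    rw [Ring.inverse_eq_inv'] at h3
    exact h3.comp w h1
  exact h2.mul (by fun_prop)

lemma S_pbb {a : ℍ[ℝ]} (ha : ‖a‖ < 1) : PBB (S a) := by
  have hm : MapsTo (S a) (Metric.ball (0 : ℍ[ℝ]) 1) (Metric.ball (0 : ℍ[ℝ]) 1) := by
    intro w hw
    simpa using S_maps ha (by simpa using hw)
  have hi : ∀ w ∈ Metric.ball (0 : ℍ[ℝ]) 1, S a (S a w) = w := fun w hw =>
    S_invol ha (by simpa using hw)
  exact ⟨InvOn.bijOn ⟨hi, hi⟩ hm hm, fun x hx => S_cd ha (by simpa using hx),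
    fun x hx => S_pc ha (by simpa using hx)⟩

lemma PBB.inner_eq {f} (hf : PBB f) (h0 : f 0 = 0) {x y : ℍ[ℝ]}
    (hx : x ∈ Metric.ball (0 : ℍ[ℝ]) 1) (hy : y ∈ Metric.ball (0 : ℍ[ℝ]) 1) :
    inner ℝ (f x) (f y) = inner ℝ x y := by
  have nx : ‖x‖ < 1 := by simpa using hx
  have ny : ‖y‖ < 1 := by simpa using hy
  have ex := hf.norm_eq h0 hx
  have ey := hf.norm_eq h0 hy
  have nfx : ‖f x‖ < 1 := by rwa [ex]
  have nfy : ‖f y‖ < 1 := by rwa [ey]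
  have hg : PBB (S (f y) ∘ (f ∘ S y)) := (S_pbb nfy).comp (hf.comp (S_pbb ny))
  have g0 : (S (f y) ∘ (f ∘ S y)) 0 = 0 := by
    simp [S_zero, S_self]
  have h1 := hg.norm_eq g0 (x := S y x) (by simpa using S_maps ny nx)
  simp only [Function.comp, S_invol ny nx] at h1
  have h2 := norm_S ny nx
  have h3 := norm_S nfy nfx
  rw [h1, ex, ey, ← h2] at h3
  have h4 : 1 - ‖S y x‖ ^ 2 ≠ 0 := by
    have := S_maps ny nx
    nlinarith [norm_nonneg (S y x)]
  have h5 := mul_left_cancel₀ h4 h3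
  rw [norm_den, norm_den, ex, ey] at h5
  linarith

lemma PBB.linear {f} (hf : PBB f) (h0 : f 0 = 0) : ∃ u v : ℍ[ℝ], ‖u‖ = 1 ∧ ‖v‖ = 1 ∧
    ∀ z ∈ Metric.ball (0 : ℍ[ℝ]) 1, f z = u * z * v := by
  have hb : (0 : ℍ[ℝ]) ∈ Metric.ball (0 : ℍ[ℝ]) 1 := Metric.mem_ball_self one_pos
  obtain ⟨A, a, b, ha, hb', hA, h⟩ := hf.pc 0 hb
  have hd : ∀ k : ℍ[ℝ], HasDerivAt (fun t : ℝ => f (t • k)) (A k) 0 := by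
    intro k
    have h1 := line_deriv 0 k 0
    have h2 : HasFDerivAt f A (0 + (0:ℝ) • k) := by simpa using hA
    have := h2.comp_hasDerivAt (0:ℝ) h1
    simpa [Function.comp_def] using this
  have hev : ∀ k : ℍ[ℝ], ∀ᶠ t : ℝ in 𝓝 0, t • k ∈ Metric.ball (0 : ℍ[ℝ]) 1 := by
    intro k
    have : Tendsto (fun t : ℝ => t • k) (𝓝 0) (𝓝 0) := by
      have : Continuous (fun t : ℝ => t • k) := by fun_prop
      simpa using this.tendsto 0
    exact this (Metric.isOpen_ball.mem_nhds hb)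
  have s1 : ∀ y ∈ Metric.ball (0 : ℍ[ℝ]) 1, ∀ k, inner ℝ (f y) (A k) = inner ℝ y k := by
    intro y hy k
    have d1 := (hasDerivAt_const (0:ℝ) (f y)).inner ℝ (hd k)
    have d2 : HasDerivAt (fun t : ℝ => t * inner ℝ y k) (inner ℝ y k) 0 := by
      simpa using (hasDerivAt_id (0:ℝ)).mul_const (inner ℝ y k)
    have e : (fun t : ℝ => inner ℝ (f y) (f (t • k))) =ᶠ[𝓝 0] fun t : ℝ => t * inner ℝ y k := by
      filter_upwards [hev k] with t ht
      rw [hf.inner_eq h0 hy ht, real_inner_smul_right]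
    have := d1.unique (d2.congr_of_eventuallyEq e)
    simpa using this
  have s2 : ∀ k, inner ℝ (A k) (A k) = inner ℝ k k := by
    intro k
    have d1 := (hd k).inner ℝ (hasDerivAt_const (0:ℝ) (A k))
    have d2 : HasDerivAt (fun t : ℝ => t * inner ℝ k k) (inner ℝ k k) 0 := by
      simpa using (hasDerivAt_id (0:ℝ)).mul_const (inner ℝ k k)
    have e : (fun t : ℝ => inner ℝ (f (t • k)) (A k)) =ᶠ[𝓝 0] fun t : ℝ => t * inner ℝ k k := by
      filter_upwards [hev k] with t ht
      rw [s1 _ ht, real_inner_smul_left]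
    have := d1.unique (d2.congr_of_eventuallyEq e)
    simpa only [inner_zero_right, zero_add] using this
  have s3 : ∀ z ∈ Metric.ball (0 : ℍ[ℝ]) 1, f z = A z := by
    intro z hz
    rw [← sub_eq_zero, ← norm_eq_zero, ← sq_eq_zero_iff, norm_sub_sq_real,
      ← real_inner_self_eq_norm_sq, ← real_inner_self_eq_norm_sq, s2, s1 z hz,
      hf.inner_eq h0 hz hz]
    ring
  have hn : ‖a‖ * ‖b‖ = 1 := by
    have := s2 1
    rw [real_inner_self_eq_norm_sq, real_inner_self_eq_norm_sq, h, mul_one, norm_mul, norm_one] at this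
    have hp : 0 ≤ ‖a‖ * ‖b‖ := by positivity
    nlinarith
  have hna : ‖a‖ ≠ 0 := norm_ne_zero_iff.2 ha
  refine ⟨‖a‖⁻¹ • a, ‖a‖ • b, ?_, ?_, ?_⟩
  · rw [norm_smul, norm_inv, norm_norm, inv_mul_cancel₀ hna]
  · rw [norm_smul, norm_norm, hn]
  · intro z hz
    rw [s3 z hz, h, mul_smul_comm, smul_mul_assoc, smul_mul_assoc, smul_smul,
      mul_inv_cancel₀ hna, one_smul]
end PCBall

/-- Paper's Theorem 3.37 for one quaternion variable: every real-analytic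
pseudoconformal bijection of the open unit ball of `ℍ` is a Möbius transformation
`S_a` composed with a rotation `z ↦ u z v`. -/
theorem stmt_16 (f : ℍ[ℝ] → ℍ[ℝ])
    (hbij : Set.BijOn f (Metric.ball (0 : ℍ[ℝ]) 1) (Metric.ball (0 : ℍ[ℝ]) 1))
    (han : AnalyticOnNhd ℝ f (Metric.ball (0 : ℍ[ℝ]) 1))
    (hpc : ∀ ξ ∈ Metric.ball (0 : ℍ[ℝ]) 1, Pseudoconformal f ξ) :
    ∃ a u v : ℍ[ℝ], ‖a‖ < 1 ∧ ‖u‖ = 1 ∧ ‖v‖ = 1 ∧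
      ∀ z ∈ Metric.ball (0 : ℍ[ℝ]) 1,
        f z = (1 - (u * z * v) * star a)⁻¹ * (a - u * z * v) := by
  have hf : PCBall.PBB f := ⟨hbij, fun x hx => (han x hx).contDiffAt, hpc⟩
  have ha : ‖f 0‖ < 1 := by
    simpa using hbij.mapsTo (Metric.mem_ball_self (x := (0 : ℍ[ℝ])) one_pos)
  obtain ⟨u, v, hu, hv, h⟩ := ((PCBall.S_pbb ha).comp hf).linear (by simp [PCBall.S_self])
  refine ⟨f 0, u, v, ha, hu, hv, fun z hz => ?_⟩
  have h1 := PCBall.S_invol ha (w := f z) (by simpa using hbij.mapsTo hz)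
  rw [← h z hz]
  exact h1.symm
end
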